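/- arXiv:0704.0028 — 7 statements merged into one kernel-verified Lean document; each statement's English description precedes it below -/
import Mathlib

section
/- Let A and B be symmetric real n×n matrices with B positive semi-definite, and let h_t be the coefficients defined by the polynomial identity haf [[λA, B], [B, A]] = Σ_{t=0}^{⌊n/2⌋} h_t λ^t. Then for each t, h_t = Σ_S Σ_T haf A_{S,S} · haf A_{T,T} · per B_{N∖S, N∖T}, where the sums run over all subsets S, T of N = {1, ..., n} with |S| = |T| = 2t, A_{S,S} is the submatrix of A with rows and columns indexed by S, and B_{N∖S,N∖T} is the submatrix of B with rows indexed by N∖S and columns indexed by N∖T. -/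
open Matrix BigOperators

/-- The hafnian of an `n × n` real matrix: for `n = 2m` it is
`(1/(m! 2^m)) Σ_π C_{π(1),π(2)} ⋯ C_{π(2m-1),π(2m)}`, and it is `0` for odd `n`. -/
noncomputable def haf {n : ℕ} (C : Matrix (Fin n) (Fin n) ℝ) : ℝ :=
  if Even n then
    (1 / ((n / 2).factorial * 2 ^ (n / 2)) : ℝ) *
      ∑ π : Equiv.Perm (Fin n),
        ∏ i : Fin (n / 2), C (π ⟨2 * i.val, by omega⟩) (π ⟨2 * i.val + 1, by omega⟩)
  else 0

/-- The permanent of an `n × n` real matrix. -/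
noncomputable def per {n : ℕ} (M : Matrix (Fin n) (Fin n) ℝ) : ℝ :=
  ∑ π : Equiv.Perm (Fin n), ∏ i, M i (π i)

/-- The equivalence used to view a block `2n × 2n` matrix (indexed by `Fin n ⊕ Fin n`)
as a matrix indexed by `Fin (2 * n)`. -/
def blockIndex (n : ℕ) : (Fin n ⊕ Fin n) ≃ Fin (2 * n) :=
  finSumFinEquiv.trans (finCongr (by omega))

/-- The monotone enumeration of a subset `S` of `Fin n` of prescribed cardinality `k`,
as a map `Fin k → Fin n`. -/
def enum {n k : ℕ} (S : Finset (Fin n)) (h : S.card = k) : Fin k → Fin n :=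
  fun i => (S.orderIsoOfFin h i : Fin n)

open MvPolynomial in
theorem coeff_ind_prod {κ σ : Type*} [Fintype κ] (S : Finset σ) (g : κ → σ)
    [Decidable (Function.Injective g ∧ Set.range g = ↑S)] :
    coeff (∑ i ∈ S, Finsupp.single i 1) (∏ k, (X (g k) : MvPolynomial σ ℝ))
      = if Function.Injective g ∧ Set.range g = ↑S then 1 else 0 := by
  classical
  have h1 : (∏ k, (X (g k) : MvPolynomial σ ℝ))
      = monomial (∑ k, Finsupp.single (g k) 1) 1 := by
    simp only [X, ← MvPolynomial.monomial_sum_one]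
  rw [h1, coeff_monomial]
  have h2 : (∑ k, Finsupp.single (g k) 1 = ∑ i ∈ S, Finsupp.single i 1) ↔
      (Finset.univ.val.map g = S.val) := by
    rw [← (Multiset.toFinsupp (α := σ)).symm.injective.eq_iff]
    change Finsupp.toMultiset _ = Finsupp.toMultiset _ ↔ _
    simp only [map_sum, Finsupp.toMultiset_single, one_smul]
    have h4 : (∑ k, ({g k} : Multiset σ)) = Finset.univ.val.map g := by
      rw [← Multiset.sum_map_singleton (Finset.univ.val.map g), Multiset.map_map]
      rfl
    rw [Finset.sum_multiset_singleton, h4]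
  have h3 : (Finset.univ.val.map g = S.val) ↔ Function.Injective g ∧ Set.range g = ↑S := by
    constructor
    · intro h
      have hn : (Finset.univ.val.map g).Nodup := h ▸ S.nodup
      refine ⟨?_, ?_⟩
      · intro a b hab
        exact Multiset.inj_on_of_nodup_map hn a (Finset.mem_univ a) b (Finset.mem_univ b) hab
      · ext x
        have : x ∈ Finset.univ.val.map g ↔ x ∈ S.val := by rw [h]
        simpa using this
    · rintro ⟨hi, hr⟩
      apply (Multiset.Nodup.ext (Multiset.Nodup.map hi Finset.univ.nodup) S.nodup).2
      intro x
      have : x ∈ Set.range g ↔ x ∈ (S : Set σ) := by rw [hr]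
      simpa using this
  simp only [h2, h3]

open MvPolynomial in
theorem coeff_ind_mul {σ : Type*} [Fintype σ] [DecidableEq σ] (U : Finset σ)
    (p q : MvPolynomial σ ℝ) :
    coeff (∑ i ∈ U, Finsupp.single i 1) (p * q)
      = ∑ S ∈ U.powerset, coeff (∑ i ∈ S, Finsupp.single i 1) p *
          coeff (∑ i ∈ U \ S, Finsupp.single i 1) q := by
  have key : ∀ (S : Finset σ) (x : σ), (∑ i ∈ S, Finsupp.single i 1 : σ →₀ ℕ) x
      = if x ∈ S then 1 else 0 := by
    intro S x
    simp [Finsupp.finsetSum_apply, Finsupp.single_apply]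
  rw [coeff_mul]
  symm
  apply Finset.sum_bij' (fun S _ => ((∑ i ∈ S, Finsupp.single i 1 : σ →₀ ℕ),
      (∑ i ∈ U \ S, Finsupp.single i 1 : σ →₀ ℕ))) (fun z _ => z.1.support)
  · intro S hS
    rw [Finset.HasAntidiagonal.mem_antidiagonal, add_comm]
    exact Finset.sum_sdiff (Finset.mem_powerset.1 hS)
  · intro z hz
    rw [Finset.HasAntidiagonal.mem_antidiagonal] at hz
    rw [Finset.mem_powerset]
    intro x hx
    have := DFunLike.congr_fun hz x
    rw [key, Finsupp.add_apply] at this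
    by_contra h
    rw [if_neg h] at this
    rw [Finsupp.mem_support_iff] at hx
    omega
  · intro S hS
    ext x
    simp [Finsupp.mem_support_iff, key]
  · intro z hz
    rw [Finset.HasAntidiagonal.mem_antidiagonal] at hz
    ext x
    · have := DFunLike.congr_fun hz x
      rw [key, Finsupp.add_apply] at this
      rw [key]
      simp only [Finsupp.mem_support_iff]
      split_ifs at this ⊢ <;> omega
    · have := DFunLike.congr_fun hz x
      rw [key, Finsupp.add_apply] at this
      rw [key]
      simp only [Finsupp.mem_support_iff, Finset.mem_sdiff]
      split_ifs at this ⊢ <;> grind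
  · intro S hS
    rfl

theorem sum_inj_range {κ α : Type*} [Fintype κ] [DecidableEq κ] [Fintype α]
    (e : κ → α)
    [DecidablePred fun g : κ → α => Function.Injective g ∧ Set.range g = Set.range e] (he : Function.Injective e) (F : (κ → α) → ℝ) :
    (∑ g : κ → α, if Function.Injective g ∧ Set.range g = Set.range e then F g else 0)
      = ∑ π : Equiv.Perm κ, F (fun k => e (π k)) := by
  rw [← Finset.sum_filter]
  symm
  apply Finset.sum_bij (fun (π : Equiv.Perm κ) _ => fun k => e (π k))
  · intro π _
    simp only [Finset.mem_filter, Finset.mem_univ, true_and]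
    exact ⟨he.comp π.injective, π.surjective.range_comp e⟩
  · intro π _ τ _ h
    ext k
    exact he (congrFun h k)
  · intro g hg
    simp only [Finset.mem_filter, Finset.mem_univ, true_and] at hg
    obtain ⟨hi, hr⟩ := hg
    have : ∀ k, ∃ l, e l = g k := fun k => by
      have : g k ∈ Set.range e := hr ▸ ⟨k, rfl⟩
      exact this
    choose f hf using this
    have hfi : Function.Injective f := by
      intro a b hab
      apply hi
      rw [← hf, ← hf, hab]
    refine ⟨Equiv.ofBijective f (Finite.injective_iff_bijective.1 hfi), Finset.mem_univ _, ?_⟩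
    funext k
    simp [hf]
  · intro π _
    rfl

theorem haf_two_mul {t : ℕ} (C : Matrix (Fin (2 * t)) (Fin (2 * t)) ℝ) :
    (t.factorial * 2 ^ t : ℝ) * haf C = ∑ π : Equiv.Perm (Fin (2 * t)),
      ∏ i : Fin t, C (π ⟨2 * i.val, by omega⟩) (π ⟨2 * i.val + 1, by omega⟩) := by
  have h : 2 * t / 2 = t := by omega
  unfold haf
  rw [if_pos (even_two_mul t), ← mul_assoc]
  have h' : (t.factorial * 2 ^ t : ℝ) * (1 / ((2 * t / 2).factorial * 2 ^ (2 * t / 2)) : ℝ) = 1 := by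
    rw [h, mul_one_div_cancel (by positivity)]
  rw [h', one_mul]
  refine Finset.sum_congr rfl fun π _ => ?_
  exact Fintype.prod_equiv (finCongr h) _ _ (fun i => rfl)

/-- the quadratic form with matrix `C` in the variables `X (j i)`. -/
noncomputable def quad {α σ : Type*} [Fintype α] (C : Matrix α α ℝ) (j : α → σ) :
    MvPolynomial σ ℝ :=
  ∑ x, ∑ y, MvPolynomial.C (C x y) * (MvPolynomial.X (j x) * MvPolynomial.X (j y))

theorem quad_pow {α σ : Type*} [Fintype α] (C : Matrix α α ℝ) (j : α → σ) (m : ℕ) :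
    quad C j ^ m = ∑ g : Fin (2 * m) → α,
      MvPolynomial.C (∏ i : Fin m, C (g ⟨2 * i.val, by omega⟩) (g ⟨2 * i.val + 1, by omega⟩))
        * ∏ k, MvPolynomial.X (j (g k)) := by
  have h1 : quad C j = ∑ u : Fin 2 → α, MvPolynomial.C (C (u 0) (u 1)) *
      ∏ b, MvPolynomial.X (j (u b)) := by
    unfold quad
    rw [← Fintype.sum_prod_type']
    exact Fintype.sum_equiv (finTwoArrowEquiv α).symm _ _ (fun z => by simp [finTwoArrowEquiv])
  let e : Fin m × Fin 2 ≃ Fin (2 * m) := finProdFinEquiv.trans (finCongr (by omega))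
  let E : (Fin m → Fin 2 → α) ≃ (Fin (2 * m) → α) :=
    (Equiv.curry (Fin m) (Fin 2) α).symm.trans (Equiv.arrowCongr e (Equiv.refl α))
  have hE : ∀ f i b, E f (e (i, b)) = f i b := by
    intro f i b
    simp [E, Function.uncurry]
  have h2 : quad C j ^ m = ∏ _i : Fin m, quad C j := by simp
  classical
  rw [h2, h1, Fintype.prod_sum]
  refine Fintype.sum_equiv E _ _ (fun f => ?_)
  rw [Finset.prod_mul_distrib, map_prod]
  congr 1
  · refine Finset.prod_congr rfl fun i _ => ?_
    rw [← hE f i 0, ← hE f i 1]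
    have e0 : e (i, 0) = ⟨2 * i.val, by omega⟩ := by ext; simp [e]
    have e1 : e (i, 1) = ⟨2 * i.val + 1, by omega⟩ := by ext; simp [e]; ring
    rw [e0, e1]
  · rw [← Fintype.prod_prod_type' (fun i b => (MvPolynomial.X (j (f i b)) : MvPolynomial σ ℝ))]
    exact Fintype.prod_equiv e _ _ (fun z => by rw [← hE f z.1 z.2])

open scoped Classical in
theorem coeff_quad_pow {α σ : Type*} [Fintype α] (C : Matrix α α ℝ) (j : α → σ) (m : ℕ)
    (W : Finset σ) :
    MvPolynomial.coeff (∑ i ∈ W, Finsupp.single i 1) (quad C j ^ m) =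
    ∑ g : Fin (2 * m) → α, if Function.Injective (fun k => j (g k)) ∧
       Set.range (fun k => j (g k)) = ↑W then
      (∏ i : Fin m, C (g ⟨2 * i.val, by omega⟩) (g ⟨2 * i.val + 1, by omega⟩)) else 0 := by
  rw [quad_pow, MvPolynomial.coeff_sum]
  refine Finset.sum_congr rfl fun g _ => ?_
  rw [MvPolynomial.coeff_C_mul, coeff_ind_prod]
  simp

/-- nonvanishing coefficients -/
theorem coeff_quad_pow_ne {α σ : Type*} [Fintype α] (C : Matrix α α ℝ) (j : α → σ) (m : ℕ)
    (W : Finset σ)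
    (h : MvPolynomial.coeff (∑ i ∈ W, Finsupp.single i 1) (quad C j ^ m) ≠ 0) :
    (W : Set σ) ⊆ Set.range j ∧ W.card = 2 * m := by
  classical
  rw [coeff_quad_pow] at h
  obtain ⟨g, -, hg⟩ := Finset.exists_ne_zero_of_sum_ne_zero h
  rw [ite_ne_right_iff] at hg
  obtain ⟨⟨hi, hr⟩, -⟩ := hg
  refine ⟨?_, ?_⟩
  · rw [← hr]
    rintro _ ⟨k, rfl⟩
    exact ⟨_, rfl⟩
  · rw [← Set.ncard_coe_finset, ← hr, ← Set.image_univ, Set.ncard_image_of_injective _ hi]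
    simp [Set.ncard_univ]

theorem coeff_quad_pow_eq {α σ : Type*} [Fintype α] (C : Matrix α α ℝ) (j : α → σ)
    (hj : Function.Injective j) (m : ℕ)
    (W : Finset σ) (e : Fin (2 * m) → α) (he : Function.Injective e)
    (hW : Set.range (fun k => j (e k)) = ↑W) :
    MvPolynomial.coeff (∑ i ∈ W, Finsupp.single i 1) (quad C j ^ m) =
      (m.factorial * 2 ^ m : ℝ) * haf (C.submatrix e e) := by
  classical
  rw [coeff_quad_pow, haf_two_mul]
  have := sum_inj_range e he (fun g =>
    ∏ i : Fin m, C (g ⟨2 * i.val, by omega⟩) (g ⟨2 * i.val + 1, by omega⟩))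
  simp only [Matrix.submatrix_apply]
  rw [← this]
  refine Finset.sum_congr rfl fun g _ => ?_
  have h1 : Function.Injective (fun k => j (g k)) ↔ Function.Injective g := hj.of_comp_iff g
  have h2 : Set.range (fun k => j (g k)) = ↑W ↔ Set.range g = Set.range e := by
    rw [← hW]
    change Set.range (j ∘ g) = Set.range (j ∘ e) ↔ _
    rw [Set.range_comp, Set.range_comp, hj.image_injective.eq_iff]
  simp only [h1, h2]

/-- the bilinear form -/
noncomputable def bil {n : ℕ} (B : Matrix (Fin n) (Fin n) ℝ) :
    MvPolynomial (Fin n ⊕ Fin n) ℝ :=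
  ∑ x, ∑ y, MvPolynomial.C (B x y) *
    (MvPolynomial.X (Sum.inl x) * MvPolynomial.X (Sum.inr y))

theorem bil_pow {n : ℕ} (B : Matrix (Fin n) (Fin n) ℝ) (r : ℕ) :
    bil B ^ r = ∑ f : Fin r → Fin n, ∑ g : Fin r → Fin n,
      MvPolynomial.C (∏ i : Fin r, B (f i) (g i))
        * ∏ k : Fin r ⊕ Fin r, MvPolynomial.X (Sum.map f g k) := by
  have h1 : bil B = ∑ u : Fin n × Fin n, MvPolynomial.C (B u.1 u.2) *
    (MvPolynomial.X (Sum.inl u.1) * MvPolynomial.X (Sum.inr u.2)) := by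
    unfold bil
    rw [← Fintype.sum_prod_type']
  have h2 : bil B ^ r = ∏ _i : Fin r, bil B := by simp
  rw [h2, h1, Fintype.prod_sum, ← Fintype.sum_prod_type']
  refine Fintype.sum_equiv (Equiv.arrowProdEquivProdArrow _ _ _) _ _ (fun f => ?_)
  rw [Finset.prod_mul_distrib, map_prod, Fintype.prod_sum_type, Finset.prod_mul_distrib]
  simp [Equiv.arrowProdEquivProdArrow]

open scoped Classical in
theorem coeff_bil_pow {n : ℕ} (B : Matrix (Fin n) (Fin n) ℝ) (r : ℕ) (U V : Finset (Fin n)) :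
    MvPolynomial.coeff (∑ i ∈ U.disjSum V, Finsupp.single i 1) (bil B ^ r) =
    ∑ f : Fin r → Fin n, ∑ g : Fin r → Fin n,
      if Function.Injective f ∧ Set.range f = ↑U then
       if Function.Injective g ∧ Set.range g = ↑V then
      (∏ i : Fin r, B (f i) (g i)) else 0 else 0 := by
  rw [bil_pow, MvPolynomial.coeff_sum]
  refine Finset.sum_congr rfl fun f _ => ?_
  rw [MvPolynomial.coeff_sum]
  refine Finset.sum_congr rfl fun g _ => ?_
  rw [MvPolynomial.coeff_C_mul, coeff_ind_prod, ← ite_and, mul_ite, mul_one, mul_zero]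
  refine if_congr ?_ rfl rfl
  have h1 : Function.Injective (Sum.map f g) ↔ Function.Injective f ∧ Function.Injective g :=
    Sum.map_injective
  have h2 : Set.range (Sum.map f g) = ↑(U.disjSum V) ↔
      Set.range f = ↑U ∧ Set.range g = ↑V := by
    constructor
    · intro h
      constructor
      · ext x
        have : Sum.inl x ∈ Set.range (Sum.map f g) ↔
          Sum.inl x ∈ (↑(U.disjSum V) : Set (Fin n ⊕ Fin n)) := by rw [h]
        simpa using this
      · ext x
        have : Sum.inr x ∈ Set.range (Sum.map f g) ↔
          Sum.inr x ∈ (↑(U.disjSum V) : Set (Fin n ⊕ Fin n)) := by rw [h]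
        simpa using this
    · rintro ⟨h, h'⟩
      ext x
      rcases x with x | x
      · have : x ∈ Set.range f ↔ x ∈ (U : Set _) := by rw [h]
        simpa using this
      · have : x ∈ Set.range g ↔ x ∈ (V : Set _) := by rw [h']
        simpa using this
  rw [h1, h2]
  tauto

theorem coeff_bil_pow_ne {n : ℕ} (B : Matrix (Fin n) (Fin n) ℝ) (r : ℕ) (U V : Finset (Fin n))
    (h : MvPolynomial.coeff (∑ i ∈ U.disjSum V, Finsupp.single i 1) (bil B ^ r) ≠ 0) :
    U.card = r ∧ V.card = r := by
  classical
  rw [coeff_bil_pow] at h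
  obtain ⟨f, -, hf⟩ := Finset.exists_ne_zero_of_sum_ne_zero h
  obtain ⟨g, -, hg⟩ := Finset.exists_ne_zero_of_sum_ne_zero hf
  rw [ite_ne_right_iff, ite_ne_right_iff] at hg
  obtain ⟨⟨hi, hr⟩, ⟨hi', hr'⟩, -⟩ := hg
  constructor
  · rw [← Set.ncard_coe_finset, ← hr, ← Set.image_univ, Set.ncard_image_of_injective _ hi]
    simp [Set.ncard_univ]
  · rw [← Set.ncard_coe_finset, ← hr', ← Set.image_univ, Set.ncard_image_of_injective _ hi']
    simp [Set.ncard_univ]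

theorem coeff_bil_pow_eq {n : ℕ} (B : Matrix (Fin n) (Fin n) ℝ) (r : ℕ) (U V : Finset (Fin n))
    (d e : Fin r → Fin n) (hd : Function.Injective d) (he : Function.Injective e)
    (hU : Set.range d = ↑U) (hV : Set.range e = ↑V) :
    MvPolynomial.coeff (∑ i ∈ U.disjSum V, Finsupp.single i 1) (bil B ^ r) =
      (r.factorial : ℝ) * per (B.submatrix d e) := by
  classical
  rw [coeff_bil_pow]
  have h1 : ∀ f : Fin r → Fin n, (∑ g : Fin r → Fin n,
      if Function.Injective f ∧ Set.range f = ↑U then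
       if Function.Injective g ∧ Set.range g = ↑V then
      (∏ i : Fin r, B (f i) (g i)) else 0 else 0) =
      if Function.Injective f ∧ Set.range f = Set.range d then
        ∑ π : Equiv.Perm (Fin r), ∏ i, B (f i) (e (π i)) else 0 := by
    intro f
    rw [← sum_inj_range e he (fun g => ∏ i : Fin r, B (f i) (g i))]
    simp only [hU, hV]
    by_cases hf : Function.Injective f ∧ Set.range f = ↑U
    · simp only [if_pos hf]
    · simp only [if_neg hf, Finset.sum_const_zero]
  simp only [h1]
  rw [sum_inj_range d hd (fun f => ∑ π : Equiv.Perm (Fin r), ∏ i, B (f i) (e (π i)))]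
  have h2 : ∀ σ : Equiv.Perm (Fin r), (∑ π : Equiv.Perm (Fin r), ∏ i, B (d (σ i)) (e (π i)))
      = per (B.submatrix d e) := by
    intro σ
    unfold per
    refine Fintype.sum_equiv (Equiv.mulRight σ⁻¹) _ _ (fun π => ?_)
    refine Fintype.prod_equiv σ _ _ (fun i => ?_)
    simp
  simp only [h2]
  simp [Fintype.card_perm]

theorem enum_injective {n k : ℕ} (S : Finset (Fin n)) (h : S.card = k) :
    Function.Injective (enum S h) := by
  intro a b hab
  exact (S.orderIsoOfFin h).injective (Subtype.ext hab)

theorem range_enum {n k : ℕ} (S : Finset (Fin n)) (h : S.card = k) :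
    Set.range (enum S h) = ↑S := by
  ext x
  constructor
  · rintro ⟨i, rfl⟩
    exact (S.orderIsoOfFin h i).2
  · intro hx
    obtain ⟨i, hi⟩ := (S.orderIsoOfFin h).surjective ⟨x, hx⟩
    exact ⟨i, by simp [enum, hi]⟩

theorem sum_supp {α σ : Type*} [Fintype α] (j : α ↪ σ)
    (P : Finset (Finset σ)) (f : Finset σ → ℝ) (hP : ∀ T : Finset α, T.map j ∈ P)
    (hf : ∀ W ∈ P, f W ≠ 0 → (W : Set σ) ⊆ Set.range j) :
    ∑ W ∈ P, f W = ∑ T : Finset α, f (T.map j) := by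
  classical
  have h1 : ∑ T : Finset α, f (T.map j)
      = ∑ W ∈ Finset.univ.map (Finset.mapEmbedding j).toEmbedding, f W := by
    rw [Finset.sum_map]
    rfl
  rw [h1]
  symm
  apply Finset.sum_subset
  · intro W hW
    obtain ⟨T, -, rfl⟩ := Finset.mem_map.1 hW
    exact hP T
  · intro W hW hn
    by_contra h
    apply hn
    obtain ⟨T, hT⟩ := Finset.subset_map_iff.1
      (show W ⊆ Finset.univ.map j from fun x hx => by
        obtain ⟨y, rfl⟩ := hf W hW h hx
        simp)
    exact Finset.mem_map.2 ⟨T, Finset.mem_univ _, hT.2.symm⟩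

theorem triple_coeff {n : ℕ} (A B : Matrix (Fin n) (Fin n) ℝ) (p r s : ℕ) :
    MvPolynomial.coeff (∑ i ∈ (Finset.univ : Finset (Fin n ⊕ Fin n)), Finsupp.single i 1)
      (quad A Sum.inl ^ p * (quad A Sum.inr ^ s * bil B ^ r)) =
    ∑ S : Finset (Fin n), ∑ T : Finset (Fin n),
      MvPolynomial.coeff (∑ i ∈ S.map (Function.Embedding.inl (β := Fin n)), Finsupp.single i 1)
        (quad A (Sum.inl : Fin n → Fin n ⊕ Fin n) ^ p) *
      (MvPolynomial.coeff (∑ i ∈ T.map (Function.Embedding.inr (α := Fin n)), Finsupp.single i 1)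
        (quad A (Sum.inr : Fin n → Fin n ⊕ Fin n) ^ s) *
       MvPolynomial.coeff (∑ i ∈ Sᶜ.disjSum Tᶜ, Finsupp.single i 1) (bil B ^ r)) := by
  rw [coeff_ind_mul, sum_supp Function.Embedding.inl]
  · refine Finset.sum_congr rfl fun S _ => ?_
    rw [coeff_ind_mul, sum_supp Function.Embedding.inr, Finset.mul_sum]
    · refine Finset.sum_congr rfl fun T _ => ?_
      have : (Finset.univ \ S.map (Function.Embedding.inl (β := Fin n))) \
          T.map (Function.Embedding.inr (α := Fin n)) = Sᶜ.disjSum Tᶜ := by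
        ext x
        rcases x with x | x <;> simp
      rw [this]
    · intro T
      rw [Finset.mem_powerset]
      intro x hx
      rcases x with x | x <;> simp at hx ⊢
    · intro W _ h
      exact (coeff_quad_pow_ne A Sum.inr s W (left_ne_zero_of_mul h)).1
  · intro T
    simp
  · intro W _ h
    exact (coeff_quad_pow_ne A Sum.inl p W (left_ne_zero_of_mul h)).1

theorem triple_ne {n : ℕ} (A B : Matrix (Fin n) (Fin n) ℝ) (p r s : ℕ)
    (h : MvPolynomial.coeff (∑ i ∈ (Finset.univ : Finset (Fin n ⊕ Fin n)), Finsupp.single i 1)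
      (quad A Sum.inl ^ p * (quad A Sum.inr ^ s * bil B ^ r)) ≠ 0) :
    2 * p + r = n ∧ 2 * s + r = n := by
  rw [triple_coeff] at h
  obtain ⟨S, -, h⟩ := Finset.exists_ne_zero_of_sum_ne_zero h
  obtain ⟨T, -, h⟩ := Finset.exists_ne_zero_of_sum_ne_zero h
  have h1 := (coeff_quad_pow_ne _ _ _ _ (left_ne_zero_of_mul h)).2
  have h2 := (coeff_quad_pow_ne _ _ _ _ (left_ne_zero_of_mul (right_ne_zero_of_mul h))).2
  have h3 := coeff_bil_pow_ne _ _ _ _ (right_ne_zero_of_mul (right_ne_zero_of_mul h))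
  rw [Finset.card_map] at h1 h2
  have h4 := S.card_add_card_compl
  have h5 := T.card_add_card_compl
  rw [Fintype.card_fin] at h4 h5
  omega

/-- the right-hand side -/
noncomputable def rhs {n : ℕ} (A B : Matrix (Fin n) (Fin n) ℝ) (t : ℕ) : ℝ :=
  ∑ S : {S : Finset (Fin n) // S.card = 2 * t},
              ∑ T : {T : Finset (Fin n) // T.card = 2 * t},
        haf (A.submatrix (enum S.1 S.2) (enum S.1 S.2)) *
          haf (A.submatrix (enum T.1 T.2) (enum T.1 T.2)) *
          per (B.submatrix
            (enum (S.1ᶜ) (by simp [Finset.card_compl, S.2] : (S.1ᶜ).card = n - 2 * t))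
            (enum (T.1ᶜ) (by simp [Finset.card_compl, T.2] : (T.1ᶜ).card = n - 2 * t)))

theorem sum_card_subtype {n k : ℕ} (f : Finset (Fin n) → ℝ) (hf : ∀ S, f S ≠ 0 → S.card = k) :
    ∑ S, f S = ∑ S : {S : Finset (Fin n) // S.card = k}, f S.1 := by
  rw [← Finset.sum_subtype (Finset.univ.filter fun S : Finset (Fin n) => S.card = k)
    (by simp) f]
  symm
  apply Finset.sum_subset (Finset.subset_univ _)
  intro S _ hS
  by_contra h
  exact hS (by simp [hf S h])

theorem triple_eq {n : ℕ} (A B : Matrix (Fin n) (Fin n) ℝ) (t : ℕ) :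
    MvPolynomial.coeff (∑ i ∈ (Finset.univ : Finset (Fin n ⊕ Fin n)), Finsupp.single i 1)
      (quad A Sum.inl ^ t * (quad A Sum.inr ^ t * bil B ^ (n - 2 * t))) =
    (t.factorial * 2 ^ t : ℝ) * (t.factorial * 2 ^ t : ℝ) * ((n - 2 * t).factorial : ℝ)
      * rhs A B t := by
  rw [triple_coeff, sum_card_subtype (k := 2 * t)]
  · unfold rhs
    rw [Finset.mul_sum]
    refine Finset.sum_congr rfl fun S _ => ?_
    rw [sum_card_subtype (k := 2 * t), Finset.mul_sum]
    · refine Finset.sum_congr rfl fun T _ => ?_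
      rw [coeff_quad_pow_eq A Sum.inl Sum.inl_injective t _ (enum S.1 S.2)
          (enum_injective _ _) (by
            change Set.range (Sum.inl ∘ _) = _
            rw [Set.range_comp, range_enum, Finset.coe_map]; rfl),
        coeff_quad_pow_eq A Sum.inr Sum.inr_injective t _ (enum T.1 T.2)
          (enum_injective _ _) (by
            change Set.range (Sum.inr ∘ _) = _
            rw [Set.range_comp, range_enum, Finset.coe_map]; rfl),
        coeff_bil_pow_eq B (n - 2 * t) _ _
          (enum (S.1ᶜ) (by simp [Finset.card_compl, S.2] : (S.1ᶜ).card = n - 2 * t))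
          (enum (T.1ᶜ) (by simp [Finset.card_compl, T.2] : (T.1ᶜ).card = n - 2 * t))
          (enum_injective _ _) (enum_injective _ _) (range_enum _ _) (range_enum _ _)]
      ring
    · intro T h
      have h2 := (coeff_quad_pow_ne _ _ _ _ (left_ne_zero_of_mul (right_ne_zero_of_mul h))).2
      rwa [Finset.card_map] at h2
  · intro S h
    obtain ⟨T, -, h⟩ := Finset.exists_ne_zero_of_sum_ne_zero h
    have h1 := (coeff_quad_pow_ne _ _ _ _ (left_ne_zero_of_mul h)).2
    rwa [Finset.card_map] at h1

theorem quad_block {n : ℕ} (A B : Matrix (Fin n) (Fin n) ℝ) (hB : Bᵀ = B) (l : ℝ) :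
    quad (Matrix.fromBlocks (l • A) B B A) (fun x => x) =
      MvPolynomial.C l * quad A Sum.inl +
        (quad A Sum.inr + MvPolynomial.C 2 * bil B) := by
  have h1 : (∑ x, ∑ y, MvPolynomial.C (B x y) *
      (MvPolynomial.X (Sum.inr x) * MvPolynomial.X (Sum.inl y)) :
        MvPolynomial (Fin n ⊕ Fin n) ℝ) = bil B := by
    unfold bil
    rw [Finset.sum_comm]
    refine Finset.sum_congr rfl fun x _ => Finset.sum_congr rfl fun y _ => ?_
    have : B y x = B x y := congrFun (congrFun hB x) y
    rw [this, mul_comm (MvPolynomial.X (Sum.inr y))]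
  have h2 : (∑ x, ∑ y, MvPolynomial.C (l * A x y) *
      (MvPolynomial.X (Sum.inl x) * MvPolynomial.X (Sum.inl y)) :
        MvPolynomial (Fin n ⊕ Fin n) ℝ) = MvPolynomial.C l * quad A Sum.inl := by
    unfold quad
    simp only [Finset.mul_sum, MvPolynomial.C_mul, mul_assoc]
  have h3 : (MvPolynomial.C 2 : MvPolynomial (Fin n ⊕ Fin n) ℝ) = 2 := map_ofNat _ 2
  rw [h3]
  conv_lhs => unfold quad
  simp only [Fintype.sum_sum_type, Matrix.fromBlocks_apply₁₁, Matrix.fromBlocks_apply₁₂,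
    Matrix.fromBlocks_apply₂₁, Matrix.fromBlocks_apply₂₂, Finset.sum_add_distrib,
    Matrix.smul_apply, smul_eq_mul]
  rw [h1, h2]
  change _ + bil B + (bil B + quad A Sum.inr) = _
  ring

theorem haf_block {n : ℕ} (A B : Matrix (Fin n) (Fin n) ℝ) (hB : Bᵀ = B) (l : ℝ) :
    haf ((Matrix.fromBlocks (l • A) B B A).submatrix
          (blockIndex n).symm (blockIndex n).symm)
      = ∑ t ∈ Finset.range (n / 2 + 1), rhs A B t * l ^ t := by
  have h0 : ((n.factorial : ℝ) * 2 ^ n) ≠ 0 := by positivity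
  apply mul_left_cancel₀ h0
  rw [← coeff_quad_pow_eq (Matrix.fromBlocks (l • A) B B A) (fun x => x)
    Function.injective_id n Finset.univ (blockIndex n).symm (blockIndex n).symm.injective
    (by rw [Finset.coe_univ]; exact (blockIndex n).symm.surjective.range_eq),
    quad_block A B hB, add_pow, MvPolynomial.coeff_sum]
  have hterm : ∀ p ∈ Finset.range (n + 1), MvPolynomial.coeff
      (∑ i ∈ (Finset.univ : Finset (Fin n ⊕ Fin n)), Finsupp.single i 1)
      ((MvPolynomial.C l * quad A Sum.inl) ^ p *
        (quad A Sum.inr + MvPolynomial.C 2 * bil B) ^ (n - p) * (n.choose p : MvPolynomial (Fin n ⊕ Fin n) ℝ)) =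
      ∑ s ∈ Finset.range (n - p + 1), (l ^ p * 2 ^ (n - p - s) * (n.choose p : ℝ)
        * ((n - p).choose s : ℝ)) * MvPolynomial.coeff
      (∑ i ∈ (Finset.univ : Finset (Fin n ⊕ Fin n)), Finsupp.single i 1)
        (quad A Sum.inl ^ p * (quad A Sum.inr ^ s * bil B ^ (n - p - s))) := by
    intro p _
    rw [add_pow, Finset.mul_sum, Finset.sum_mul, MvPolynomial.coeff_sum]
    refine Finset.sum_congr rfl fun s _ => ?_
    rw [← MvPolynomial.coeff_C_mul]
    congr 1
    simp only [MvPolynomial.C_mul, MvPolynomial.C_pow, map_natCast, mul_pow]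
    ring
  rw [Finset.sum_congr rfl hterm, Finset.mul_sum]
  symm
  have hsub : Finset.range (n / 2 + 1) ⊆ Finset.range (n + 1) := by
    intro x hx
    rw [Finset.mem_range] at *
    omega
  rw [← Finset.sum_subset hsub]
  · refine Finset.sum_congr rfl fun p hp => ?_
    rw [Finset.mem_range] at hp
    symm
    rw [Finset.sum_eq_single p]
    · have e : n - p - p = n - 2 * p := by omega
      rw [e, triple_eq]
      have c1 := Nat.choose_mul_factorial_mul_factorial (show p ≤ n by omega)
      have c2 := Nat.choose_mul_factorial_mul_factorial (show p ≤ n - p by omega)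
      rw [e] at c2
      have c3 : (n.factorial : ℝ) = n.choose p * p.factorial *
          ((n - p).choose p * p.factorial * (n - 2 * p).factorial) := by
        rw [← c1, ← c2]; push_cast; ring
      have c4 : (2 : ℝ) ^ n = 2 ^ (n - 2 * p) * (2 ^ p * 2 ^ p) := by
        rw [← pow_add, ← pow_add]; congr 1; omega
      rw [c3, c4]
      ring
    · intro s hs hsp
      rw [Finset.mem_range] at hs
      by_contra h
      have := triple_ne A B p (n - p - s) s (right_ne_zero_of_mul h)
      omega
    · intro h
      exact absurd (Finset.mem_range.2 (by omega)) h
  · intro p hp hp'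
    rw [Finset.mem_range] at hp hp'
    apply Finset.sum_eq_zero
    intro s hs
    by_contra h
    have := triple_ne A B p (n - p - s) s (right_ne_zero_of_mul h)
    omega

theorem hafnian_block_coeff_formula (n : ℕ) (A B : Matrix (Fin n) (Fin n) ℝ)
    (hA : Aᵀ = A) (hBsymm : Bᵀ = B)
    (hBpsd : ∀ x : Fin n → ℝ, 0 ≤ x ⬝ᵥ B *ᵥ x)
    (h : ℕ → ℝ)
    (hh : ∀ l : ℝ,
      haf ((Matrix.fromBlocks (l • A) B B A).submatrix
          (blockIndex n).symm (blockIndex n).symm)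
        = ∑ t ∈ Finset.range (n / 2 + 1), h t * l ^ t) :
    ∀ t ≤ n / 2,
      h t = ∑ S : {S : Finset (Fin n) // S.card = 2 * t},
              ∑ T : {T : Finset (Fin n) // T.card = 2 * t},
        haf (A.submatrix (enum S.1 S.2) (enum S.1 S.2)) *
          haf (A.submatrix (enum T.1 T.2) (enum T.1 T.2)) *
          per (B.submatrix
            (enum (S.1ᶜ) (by simp [Finset.card_compl, S.2] : (S.1ᶜ).card = n - 2 * t))
            (enum (T.1ᶜ) (by simp [Finset.card_compl, T.2] : (T.1ᶜ).card = n - 2 * t))) := by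
  intro t ht
  change h t = rhs A B t
  have hp : (∑ t ∈ Finset.range (n / 2 + 1), Polynomial.C (h t) * Polynomial.X ^ t) =
      ∑ t ∈ Finset.range (n / 2 + 1), Polynomial.C (rhs A B t) * Polynomial.X ^ t := by
    apply Polynomial.funext
    intro l
    simp only [Polynomial.eval_finsetSum, Polynomial.eval_mul, Polynomial.eval_C,
      Polynomial.eval_pow, Polynomial.eval_X]
    rw [← hh l, haf_block A B hBsymm l]
  have := congrArg (fun q => Polynomial.coeff q t) hp
  simpa [Polynomial.finsetSum_coeff, Polynomial.coeff_X_pow, Nat.lt_succ_iff, ht] using this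
end

section
/- Let A and B be symmetric real n×n matrices with B positive semi-definite, and let λ ≥ 0 be a real number. Then haf [[λA, B], [B, A]] ≥ per B, where [[λA, B], [B, A]] denotes the 2n×2n block matrix with blocks λA, B, B, A. -/
open Matrix BigOperators

namespace HafAux

open MvPolynomial

/-- The exponent vector with all entries `1`. -/
noncomputable def ones (ι : Type) [Fintype ι] : ι →₀ ℕ := ∑ i, Finsupp.single i 1

lemma ones_apply {ι : Type} [Fintype ι] (i : ι) : ones ι i = 1 := by
  classical
  simp [ones, Finsupp.finsetSum_apply, Finsupp.single_apply]

/-- The multilinear coefficient. -/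
noncomputable def L {ι : Type} [Fintype ι] (p : MvPolynomial ι ℝ) : ℝ := coeff (ones ι) p

lemma L_sum {ι α : Type} [Fintype ι] (s : Finset α) (f : α → MvPolynomial ι ℝ) :
    L (∑ a ∈ s, f a) = ∑ a ∈ s, L (f a) := by
  simp [L, coeff_sum]

lemma L_C_mul {ι : Type} [Fintype ι] (c : ℝ) (p : MvPolynomial ι ℝ) :
    L (C c * p) = c * L p := by
  simp [L]

open Classical in
/-- indicator of bijectivity -/
noncomputable def ind {ι κ : Type} (g : κ → ι) : ℝ := if Function.Bijective g then 1 else 0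

lemma L_prod_X {ι κ : Type} [Fintype ι] [Fintype κ] (g : κ → ι) :
    L (∏ k, (X (g k) : MvPolynomial ι ℝ)) = ind g := by
  classical
  have h1 : (∏ k, (X (g k) : MvPolynomial ι ℝ)) =
      monomial (∑ k, Finsupp.single (g k) 1) 1 := by
    rw [monomial_sum_one]; rfl
  rw [L, h1, coeff_monomial, ind]
  congr 1
  rw [Finsupp.ext_iff, Function.bijective_iff_existsUnique]
  apply propext
  apply forall_congr'
  intro i
  rw [ones_apply, Finsupp.finsetSum_apply]
  simp only [Finsupp.single_apply]
  rw [Finset.sum_boole, Nat.cast_id, Finset.card_eq_one]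
  constructor
  · rintro ⟨a, ha⟩
    simp only [Finset.ext_iff, Finset.mem_filter, Finset.mem_univ, true_and,
      Finset.mem_singleton] at ha
    exact ⟨a, (ha a).2 rfl, fun y hy => (ha y).1 hy⟩
  · rintro ⟨a, ha, hu⟩
    refine ⟨a, ?_⟩
    ext y
    simp only [Finset.mem_filter, Finset.mem_univ, true_and, Finset.mem_singleton]
    exact ⟨fun h => hu y h, fun h => h ▸ ha⟩

lemma sum_bij_eq {ι κ : Type} [Fintype ι] [Fintype κ] [DecidableEq ι] [DecidableEq κ] (F : (κ → ι) → ℝ) :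
    ∑ g : κ → ι, F g * ind g = ∑ e : κ ≃ ι, F e := by
  symm
  apply Fintype.sum_of_injective (fun e : κ ≃ ι => (e : κ → ι)) DFunLike.coe_injective
  · intro g hg
    rw [ind, if_neg, mul_zero]
    intro hb
    exact hg ⟨Equiv.ofBijective g hb, rfl⟩
  · intro e
    simp [ind]

/-- splitting -/
lemma L_split {n : ℕ} (p q : MvPolynomial (Fin n) ℝ) :
    L (rename (Sum.inl : Fin n → Fin n ⊕ Fin n) p * rename Sum.inr q) = L p * L q := by
  classical
  induction p using MvPolynomial.induction_on' with
  | add p₁ p₂ h1 h2 =>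
    have : ∀ a b : MvPolynomial (Fin n ⊕ Fin n) ℝ, L (a + b) = L a + L b := by simp [L]
    have h' : ∀ a b : MvPolynomial (Fin n) ℝ, L (a + b) = L a + L b := by simp [L]
    rw [map_add, add_mul, this, h1, h2, h', add_mul]
  | monomial s a =>
    induction q using MvPolynomial.induction_on' with
    | add p₁ p₂ h1 h2 =>
      have : ∀ a b : MvPolynomial (Fin n ⊕ Fin n) ℝ, L (a + b) = L a + L b := by simp [L]
      have h' : ∀ a b : MvPolynomial (Fin n) ℝ, L (a + b) = L a + L b := by simp [L]
      rw [map_add, mul_add, this, h1, h2, h', mul_add]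
    | monomial t b =>
      rw [rename_monomial, rename_monomial, monomial_mul]
      simp only [L, coeff_monomial]
      have key : (Finsupp.mapDomain Sum.inl s + Finsupp.mapDomain Sum.inr t = ones (Fin n ⊕ Fin n))
          ↔ (s = ones (Fin n) ∧ t = ones (Fin n)) := by
        have hl : ∀ i, (Finsupp.mapDomain (Sum.inl : Fin n → Fin n ⊕ Fin n) s) (Sum.inl i) = s i :=
          fun i => Finsupp.mapDomain_apply Sum.inl_injective s i
        have hr : ∀ i, (Finsupp.mapDomain (Sum.inr : Fin n → Fin n ⊕ Fin n) t) (Sum.inr i) = t i :=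
          fun i => Finsupp.mapDomain_apply Sum.inr_injective t i
        have hl' : ∀ i, (Finsupp.mapDomain (Sum.inl : Fin n → Fin n ⊕ Fin n) s) (Sum.inr i) = 0 :=
          fun i => Finsupp.mapDomain_of_notMem_range s _ (by simp)
        have hr' : ∀ i, (Finsupp.mapDomain (Sum.inr : Fin n → Fin n ⊕ Fin n) t) (Sum.inl i) = 0 :=
          fun i => Finsupp.mapDomain_of_notMem_range t _ (by simp)
        simp only [Finsupp.ext_iff, Finsupp.add_apply, ones_apply, Sum.forall, hl, hr, hl', hr',
          add_zero, zero_add]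
      by_cases h1 : s = ones (Fin n) <;> by_cases h2 : t = ones (Fin n) <;> rw [if_congr key rfl rfl] <;> simp [h1, h2]

/-- quadratic form of a matrix -/
noncomputable def quad {ι : Type} [Fintype ι] (M : Matrix ι ι ℝ) : MvPolynomial ι ℝ :=
  ∑ p : ι × ι, C (M p.1 p.2) * (X p.1 * X p.2)

lemma haf_eq (N m : ℕ) (h : N / 2 = m) (hN : Even N) (M : Matrix (Fin N) (Fin N) ℝ) :
    haf M = (1 / (m.factorial * 2 ^ m) : ℝ) *
      ∑ π : Equiv.Perm (Fin N),
        ∏ i : Fin m, M (π ⟨2 * i.val, by omega⟩) (π ⟨2 * i.val + 1, by omega⟩) := by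
  subst h
  simp [haf, hN]

/-- pairing -/
def pairEquiv (n : ℕ) : Fin n × Fin 2 ≃ Fin (2 * n) :=
  finProdFinEquiv.trans (finCongr (by omega))

/-- functions to pairs -/
def funEquiv (n : ℕ) (ι : Type) : (Fin (2 * n) → ι) ≃ (Fin n → ι × ι) where
  toFun g i := (g (pairEquiv n (i, 0)), g (pairEquiv n (i, 1)))
  invFun f k := if ((pairEquiv n).symm k).2 = 0 then (f ((pairEquiv n).symm k).1).1
    else (f ((pairEquiv n).symm k).1).2
  left_inv g := by
    funext k
    obtain ⟨⟨i, j⟩, rfl⟩ := (pairEquiv n).surjective k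
    fin_cases j <;> simp
  right_inv f := by
    funext i
    simp

lemma L_quad_pow {n : ℕ} {ι : Type} [Fintype ι] [DecidableEq ι] (M : Matrix ι ι ℝ) :
    L (quad M ^ n) = ∑ e : Fin (2 * n) ≃ ι,
      ∏ i : Fin n, M (e (pairEquiv n (i, 0))) (e (pairEquiv n (i, 1))) := by
  rw [quad, Fintype.sum_pow, L_sum, ← (funEquiv n ι).sum_comp]
  have := sum_bij_eq (κ := Fin (2 * n)) (ι := ι)
    (fun g => ∏ i : Fin n, M (g (pairEquiv n (i, 0))) (g (pairEquiv n (i, 1))))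
  refine Eq.trans ?_ this
  apply Finset.sum_congr rfl
  intro g _
  rw [← L_prod_X, ← L_C_mul]
  congr 1
  rw [Finset.prod_mul_distrib, map_prod]
  congr 1
  rw [← (pairEquiv n).prod_comp, Fintype.prod_prod_type]
  simp [funEquiv]

lemma haf_block {n : ℕ} (M : Matrix (Fin n ⊕ Fin n) (Fin n ⊕ Fin n) ℝ) :
    haf (M.submatrix (blockIndex n).symm (blockIndex n).symm) =
      (1 / (n.factorial * 2 ^ n) : ℝ) * L (quad M ^ n) := by
  rw [haf_eq (2 * n) n (by omega) (by simp), L_quad_pow]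
  congr 1
  refine Fintype.sum_equiv (Equiv.equivCongr (Equiv.refl _) (blockIndex n).symm) _ _ ?_
  intro π
  apply Finset.prod_congr rfl
  intro i _
  have h0 : pairEquiv n (i, 0) = ⟨2 * i.val, by omega⟩ := by
    ext; simp [pairEquiv, finProdFinEquiv]
  have h1 : pairEquiv n (i, 1) = ⟨2 * i.val + 1, by omega⟩ := by
    ext; simp [pairEquiv, finProdFinEquiv]; try omega
  rw [h0, h1]
  simp

/-- bilinear form -/
noncomputable def bil {n : ℕ} (B : Matrix (Fin n) (Fin n) ℝ) : MvPolynomial (Fin n ⊕ Fin n) ℝ :=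
  ∑ p : Fin n × Fin n, C (B p.1 p.2) * (X (Sum.inl p.1) * X (Sum.inr p.2))

lemma L_bil_pow {n : ℕ} (B : Matrix (Fin n) (Fin n) ℝ) :
    L (bil B ^ n) = n.factorial * per B := by
  classical
  rw [bil, Fintype.sum_pow, L_sum]
  have step : ∀ p : Fin n → Fin n × Fin n,
      L (∏ i, C (B (p i).1 (p i).2) * (X (Sum.inl (p i).1) * X (Sum.inr (p i).2)) :
        MvPolynomial (Fin n ⊕ Fin n) ℝ) =
      (∏ i, B (p i).1 (p i).2) * (ind (fun i => (p i).1) *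
        ind (fun i => (p i).2)) := by
    intro p
    rw [← L_prod_X, ← L_prod_X, ← L_split, ← L_C_mul]
    congr 1
    simp only [Finset.prod_mul_distrib, map_prod, rename_X]
  simp only [step]
  rw [← (Equiv.arrowProdEquivProdArrow (Fin n) (fun _ => Fin n) (fun _ => Fin n)).symm.sum_comp,
    Fintype.sum_prod_type]
  have h2 : ∀ f : Fin n → Fin n, ∑ g : Fin n → Fin n, (∏ i, B (f i) (g i)) *
      (ind f * ind g) =
      (∑ e : Fin n ≃ Fin n, ∏ i, B (f i) (e i)) * ind f := by
    intro f
    rw [← sum_bij_eq (fun g : Fin n → Fin n => ∏ i, B (f i) (g i)), Finset.sum_mul]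
    apply Finset.sum_congr rfl
    intro g _
    ring
  have h3 := Finset.sum_congr (rfl : (Finset.univ : Finset (Fin n → Fin n)) = Finset.univ)
    (fun f _ => h2 f)
  refine Eq.trans h3 ?_
  rw [sum_bij_eq (fun f : Fin n → Fin n => ∑ e : Fin n ≃ Fin n, ∏ i, B (f i) (e i))]
  have h4 : ∀ s : Fin n ≃ Fin n, ∑ e : Fin n ≃ Fin n, ∏ i, B (s i) (e i) = per B := by
    intro s
    rw [per]
    refine Fintype.sum_equiv (Equiv.equivCongr s (Equiv.refl _)) _ _ ?_
    intro e
    conv_rhs => rw [← s.prod_comp]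
    simp
  simp [h4, Fintype.card_perm]

lemma quad_block {n : ℕ} (A B : Matrix (Fin n) (Fin n) ℝ) (hB : Bᵀ = B) (l : ℝ) :
    quad (Matrix.fromBlocks (l • A) B B A) =
      C 2 * bil B + (C l * rename Sum.inl (quad A) + rename Sum.inr (quad A)) := by
  have hB' : ∀ i j, B i j = B j i := fun i j => by
    conv_lhs => rw [← hB]
    rfl
  simp only [quad, bil, Fintype.sum_prod_type, Fintype.sum_sum_type, map_sum, map_mul, rename_X,
    rename_C, Matrix.fromBlocks_apply₁₁, Matrix.fromBlocks_apply₁₂, Matrix.fromBlocks_apply₂₁,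
    Matrix.fromBlocks_apply₂₂, Finset.sum_add_distrib, Matrix.smul_apply, smul_eq_mul]
  have h : ∑ i, ∑ j, (C (B i j) * (X (Sum.inr i) * X (Sum.inl j)) :
      MvPolynomial (Fin n ⊕ Fin n) ℝ) =
      ∑ i, ∑ j, C (B i j) * (X (Sum.inl i) * X (Sum.inr j)) := by
    rw [Finset.sum_comm]
    refine Finset.sum_congr rfl fun i _ => Finset.sum_congr rfl fun j _ => ?_
    rw [hB' j i]; ring
  rw [h]
  have h2 : (C 2 : MvPolynomial (Fin n ⊕ Fin n) ℝ) = 2 := map_ofNat C 2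
  rw [h2]
  simp only [Finset.mul_sum, mul_assoc]
  simp only [← Finset.mul_sum]
  ring

/-- linear form -/
noncomputable def lin {n : ℕ} (V : Matrix (Fin n) (Fin n) ℝ) (r : Fin n) : MvPolynomial (Fin n) ℝ :=
  ∑ j, C (V r j) * X j

lemma bil_gram {n : ℕ} (V : Matrix (Fin n) (Fin n) ℝ) :
    bil (Vᵀ * V) = ∑ r, rename Sum.inl (lin V r) * rename Sum.inr (lin V r) := by
  simp only [bil, lin, map_sum, map_mul, rename_C, rename_X, Fintype.sum_prod_type,
    Matrix.mul_apply, Matrix.transpose_apply, Finset.sum_mul_sum]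
  conv_rhs => rw [Finset.sum_comm]
  refine Finset.sum_congr rfl fun i _ => ?_
  conv_rhs => rw [Finset.sum_comm]
  refine Finset.sum_congr rfl fun j _ => ?_
  rw [Finset.sum_mul]
  refine Finset.sum_congr rfl fun r _ => ?_
  ring

lemma quad_hom {n : ℕ} (A : Matrix (Fin n) (Fin n) ℝ) : (quad A).IsHomogeneous 2 := by
  apply IsHomogeneous.sum
  intro p _
  have := (isHomogeneous_C (Fin n) (A p.1 p.2)).mul
    ((isHomogeneous_X ℝ p.1).mul (isHomogeneous_X ℝ p.2))
  simpa using this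

lemma lin_hom {n : ℕ} (V : Matrix (Fin n) (Fin n) ℝ) (r : Fin n) : (lin V r).IsHomogeneous 1 := by
  apply IsHomogeneous.sum
  intro p _
  have := (isHomogeneous_C (Fin n) (V r p)).mul (isHomogeneous_X ℝ p)
  simpa using this

lemma L_hom {n d : ℕ} {p : MvPolynomial (Fin n) ℝ} (hp : p.IsHomogeneous d) (h : L p ≠ 0) :
    d = n := by
  have := hp h
  rw [← this]
  simp [Finsupp.weight_apply, Finsupp.sum_fintype, ones_apply]

lemma L_term_nonneg {n : ℕ} (A V : Matrix (Fin n) (Fin n) ℝ) (i j m : ℕ) :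
    0 ≤ L (bil (Vᵀ * V) ^ m * (rename Sum.inl (quad A) ^ i * rename Sum.inr (quad A) ^ j)) := by
  rw [bil_gram, Fintype.sum_pow, Finset.sum_mul, L_sum]
  apply Finset.sum_nonneg
  intro f _
  have h1 : (∏ k, rename Sum.inl (lin V (f k)) * rename Sum.inr (lin V (f k))) *
      (rename Sum.inl (quad A) ^ i * rename Sum.inr (quad A) ^ j) =
      rename (Sum.inl : Fin n → Fin n ⊕ Fin n) ((∏ k, lin V (f k)) * quad A ^ i) *
      rename Sum.inr ((∏ k, lin V (f k)) * quad A ^ j) := by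
    simp only [map_mul, map_prod, map_pow, Finset.prod_mul_distrib]
    ring
  rw [h1, L_split]
  have hh : ∀ i, ((∏ k, lin V (f k)) * quad A ^ i).IsHomogeneous (m + 2 * i) := by
    intro i
    have h := (IsHomogeneous.prod Finset.univ (fun k => lin V (f k)) (fun _ => 1)
      (fun k _ => lin_hom V (f k))).mul ((quad_hom A).pow i)
    simpa using h
  by_cases ha : L ((∏ k, lin V (f k)) * quad A ^ i) = 0
  · rw [ha, zero_mul]
  by_cases hb : L ((∏ k, lin V (f k)) * quad A ^ j) = 0
  · rw [hb, mul_zero]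
  have e1 := L_hom (hh i) ha
  have e2 := L_hom (hh j) hb
  have : i = j := by omega
  subst this
  exact mul_self_nonneg _

lemma main {n : ℕ} (A V : Matrix (Fin n) (Fin n) ℝ) (l : ℝ) (hl : 0 ≤ l) :
    2 ^ n * L (bil (Vᵀ * V) ^ n) ≤ L ((C 2 * bil (Vᵀ * V) +
      (C l * rename Sum.inl (quad A) + rename Sum.inr (quad A))) ^ n) := by
  rw [add_pow, L_sum]
  have hterm : ∀ m, L ((C 2 * bil (Vᵀ * V)) ^ m *
      (C l * rename Sum.inl (quad A) + rename Sum.inr (quad A)) ^ (n - m) * ((n.choose m : ℕ) : MvPolynomial (Fin n ⊕ Fin n) ℝ)) =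
      ∑ i ∈ Finset.range (n - m + 1), (2 ^ m * l ^ i * (n.choose m) * ((n - m).choose i)) *
        L (bil (Vᵀ * V) ^ m *
          (rename Sum.inl (quad A) ^ i * rename Sum.inr (quad A) ^ (n - m - i))) := by
    intro m
    rw [add_pow, Finset.mul_sum, Finset.sum_mul, L_sum]
    refine Finset.sum_congr rfl fun i _ => ?_
    rw [← L_C_mul]
    congr 1
    simp only [map_mul, map_pow, map_natCast]
    ring
  have hn : ∀ m, 0 ≤ L ((C 2 * bil (Vᵀ * V)) ^ m *
      (C l * rename Sum.inl (quad A) + rename Sum.inr (quad A)) ^ (n - m) * ((n.choose m : ℕ) : MvPolynomial (Fin n ⊕ Fin n) ℝ)) := by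
    intro m
    rw [hterm]
    exact Finset.sum_nonneg fun i _ => mul_nonneg (by positivity) (L_term_nonneg A V _ _ _)
  refine le_trans (le_of_eq ?_) (Finset.single_le_sum (fun m _ => hn m)
    (Finset.self_mem_range_succ n))
  rw [hterm]
  simp

open scoped MatrixOrder Matrix.Norms.L2Operator in
lemma exists_gram {n : ℕ} {B : Matrix (Fin n) (Fin n) ℝ} (hB : B.PosSemidef) :
    ∃ V : Matrix (Fin n) (Fin n) ℝ, B = Vᵀ * V := by
  obtain ⟨V, hV⟩ := CStarAlgebra.nonneg_iff_eq_star_mul_self.mp hB.nonneg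
  exact ⟨V, by rw [hV, Matrix.star_eq_conjTranspose,
    Matrix.conjTranspose_eq_transpose_of_trivial]⟩

end HafAux

theorem hafnian_block_ge_per (n : ℕ) (A B : Matrix (Fin n) (Fin n) ℝ)
    (hA : Aᵀ = A) (hBsymm : Bᵀ = B)
    (hBpsd : ∀ x : Fin n → ℝ, 0 ≤ x ⬝ᵥ B *ᵥ x)
    (l : ℝ) (hl : 0 ≤ l) :
    per B ≤ haf ((Matrix.fromBlocks (l • A) B B A).submatrix
      (blockIndex n).symm (blockIndex n).symm) := by
  have hps : B.PosSemidef := Matrix.PosSemidef.of_dotProduct_mulVec_nonneg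
    (by rw [Matrix.IsHermitian, Matrix.conjTranspose_eq_transpose_of_trivial, hBsymm])
    (fun x => by simpa using hBpsd x)
  obtain ⟨V, hV⟩ := HafAux.exists_gram hps
  rw [HafAux.haf_block, HafAux.quad_block A B hBsymm]
  have h := HafAux.main A V l hl
  rw [← hV, HafAux.L_bil_pow] at h
  rw [one_div, ← div_eq_inv_mul, le_div_iff₀ (by positivity)]
  linarith
end

section
/- Let A and B be symmetric real n×n matrices with B positive definite, and let λ ≥ 0 be a real number. Then haf [[λA, B], [B, A]] = per B holds if and only if A is a diagonal matrix or λ = 0. -/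
open Matrix BigOperators

open MvPolynomial

noncomputable def onesF (ι : Type*) [Fintype ι] : ι →₀ ℕ := Finsupp.equivFunOnFinite.symm (fun _ => 1)

lemma onesF_apply {ι : Type*} [Fintype ι] (i : ι) : onesF ι i = 1 := rfl

open Classical in
lemma coeff_prod_X {ι κ : Type*} [Fintype ι] [DecidableEq ι] [Fintype κ] (g : κ → ι) :
    coeff (onesF ι) (∏ i, (X (g i) : MvPolynomial ι ℝ)) = if Function.Bijective g then 1 else 0 := by
  have h1 : (∏ i, (X (g i) : MvPolynomial ι ℝ)) = monomial (∑ i, Finsupp.single (g i) 1) 1 := by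
    rw [monomial_sum_one]; rfl
  rw [h1, coeff_monomial]
  congr 1
  rw [eq_iff_iff, Finsupp.ext_iff]
  simp only [onesF_apply, Finsupp.finsetSum_apply, Finsupp.single_apply]
  simp only [Finset.sum_boole, Nat.cast_id]
  rw [Function.bijective_iff_existsUnique]
  refine forall_congr' fun b => ?_
  rw [Finset.card_eq_one]
  constructor
  · rintro ⟨a, ha⟩
    refine ⟨a, ?_, fun y hy => ?_⟩
    · have : a ∈ ({a} : Finset κ) := by simp
      rw [← ha] at this; simpa using this
    · have : y ∈ Finset.univ.filter (fun x => g x = b) := by simpa using hy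
      rw [ha] at this; simpa using this
  · rintro ⟨a, ha, hu⟩
    refine ⟨a, ?_⟩
    ext y
    simp only [Finset.mem_filter, Finset.mem_univ, true_and, Finset.mem_singleton]
    exact ⟨hu y, fun h => h ▸ ha⟩

open Classical in
lemma sum_bij_equiv {ι κ : Type*} [Fintype ι] [Fintype κ] [DecidableEq ι] [DecidableEq κ] (F : (κ → ι) → ℝ) :
    ∑ g : κ → ι, F g * (if Function.Bijective g then 1 else 0) = ∑ e : κ ≃ ι, F e := by
  simp only [mul_ite, mul_one, mul_zero]
  rw [← Finset.sum_filter]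
  symm
  refine Finset.sum_bij (fun e _ => (e : κ → ι)) ?_ ?_ ?_ ?_
  · intro e _; simp
  · intro a _ b _ h; exact DFunLike.coe_injective h
  · intro g hg
    exact ⟨Equiv.ofBijective g (by simpa using hg), by simp, rfl⟩
  · intros; rfl

/-- quadratic form polynomial -/
noncomputable def qf {ι : Type*} [Fintype ι] (D : Matrix ι ι ℝ) : MvPolynomial ι ℝ :=
  ∑ p : ι × ι, C (D p.1 p.2) * (X p.1 * X p.2)

lemma coeff_qf_pow {ι : Type*} [Fintype ι] [DecidableEq ι] (D : Matrix ι ι ℝ) (m : ℕ) :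
    coeff (onesF ι) (qf D ^ m) =
      ∑ e : (Fin m ⊕ Fin m) ≃ ι, ∏ i, D (e (Sum.inl i)) (e (Sum.inr i)) := by
  classical
  rw [qf, Fintype.sum_pow, coeff_sum]
  rw [← sum_bij_equiv (fun g : Fin m ⊕ Fin m → ι => ∏ i, D (g (Sum.inl i)) (g (Sum.inr i)))]
  rw [← Equiv.sum_comp ((Equiv.sumArrowEquivProdArrow (Fin m) (Fin m) ι).trans
    (Equiv.arrowProdEquivProdArrow (Fin m) (fun _ => ι) (fun _ => ι)).symm)]
  refine Finset.sum_congr rfl fun g _ => ?_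
  rw [Finset.prod_mul_distrib, ← map_prod, coeff_C_mul]
  have h := coeff_prod_X g
  rw [Fintype.prod_sum_type, ← Finset.prod_mul_distrib] at h
  exact congrArg₂ (· * ·) rfl h

noncomputable def evOdd (m N : ℕ) (h : N / 2 = m) (hN : Even N) : (Fin m ⊕ Fin m) ≃ Fin N :=
  Equiv.ofBijective (Sum.elim (fun i => ⟨2 * i.val, by omega⟩) (fun i => ⟨2 * i.val + 1, by omega⟩)) (by
    obtain ⟨k, hk⟩ := hN
    constructor
    · rintro (a | a) (b | b) h <;> simp at h <;> first | omega | (congr 1; ext; omega)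
    · intro b
      rcases Nat.even_or_odd' b.val with ⟨c, hc | hc⟩
      · exact ⟨Sum.inl ⟨c, by omega⟩, by ext; simp [hc]⟩
      · exact ⟨Sum.inr ⟨c, by omega⟩, by ext; simp [hc]⟩)

lemma haf_eq {n : ℕ} (D : Matrix (Fin n ⊕ Fin n) (Fin n ⊕ Fin n) ℝ) :
    haf (D.submatrix (blockIndex n).symm (blockIndex n).symm) =
      (1 / (n.factorial * 2 ^ n) : ℝ) * coeff (onesF _) (qf D ^ n) := by
  have hev : Even (2 * n) := even_two_mul n
  have hm : 2 * n / 2 = n := by omega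
  rw [haf, if_pos hev]
  have key : ∀ m, (h : 2 * n / 2 = m) → ∑ π : Equiv.Perm (Fin (2 * n)),
        ∏ i : Fin m, (D.submatrix (blockIndex n).symm (blockIndex n).symm) (π ⟨2 * i.val, by omega⟩) (π ⟨2 * i.val + 1, by omega⟩)
        = coeff (onesF _) (qf D ^ m) := by
    intro m h
    rw [coeff_qf_pow]
    rw [← Equiv.sum_comp (Equiv.equivCongr (evOdd m (2 * n) h hev).symm (blockIndex n).symm)]
    rfl
  rw [key _ rfl, hm]

lemma haf_congr {n : ℕ} (D E : Matrix (Fin n ⊕ Fin n) (Fin n ⊕ Fin n) ℝ)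
    (h : ∀ i j, i ≠ j → D i j = E i j) :
    coeff (onesF _) (qf D ^ n) = coeff (onesF _) (qf E ^ n) := by
  rw [coeff_qf_pow, coeff_qf_pow]
  refine Finset.sum_congr rfl fun e _ => Finset.prod_congr rfl fun i _ => h _ _ ?_
  simp

lemma coeff_rename_mul {ι κ : Type*} [Fintype ι] [Fintype κ] (p : MvPolynomial ι ℝ) (q : MvPolynomial κ ℝ) :
    coeff (onesF (ι ⊕ κ)) (rename Sum.inl p * rename Sum.inr q) =
      coeff (onesF ι) p * coeff (onesF κ) q := by
  classical
  induction p using MvPolynomial.induction_on' with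
  | add p1 p2 h1 h2 => simp only [map_add, add_mul, coeff_add, h1, h2]
  | monomial a r =>
    induction q using MvPolynomial.induction_on' with
    | add p1 p2 h1 h2 => simp only [map_add, mul_add, coeff_add, h1, h2]
    | monomial b s =>
      rw [rename_monomial, rename_monomial, monomial_mul, coeff_monomial, coeff_monomial, coeff_monomial]
      have : (Finsupp.mapDomain Sum.inl a + Finsupp.mapDomain Sum.inr b = onesF (ι ⊕ κ)) ↔
          (a = onesF ι ∧ b = onesF κ) := by
        simp only [Finsupp.ext_iff, Sum.forall, Finsupp.add_apply, onesF_apply]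
        have h1 : ∀ i, Finsupp.mapDomain (Sum.inl : ι → ι ⊕ κ) a (Sum.inl i) = a i := fun i =>
          Finsupp.mapDomain_apply Sum.inl_injective _ _
        have h2 : ∀ i, Finsupp.mapDomain (Sum.inr : κ → ι ⊕ κ) b (Sum.inr i) = b i := fun i =>
          Finsupp.mapDomain_apply Sum.inr_injective _ _
        have h3 : ∀ i, Finsupp.mapDomain (Sum.inl : ι → ι ⊕ κ) a (Sum.inr i) = 0 := fun i =>
          Finsupp.mapDomain_of_notMem_range _ _ (by simp)
        have h4 : ∀ i, Finsupp.mapDomain (Sum.inr : κ → ι ⊕ κ) b (Sum.inl i) = 0 := fun i =>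
          Finsupp.mapDomain_of_notMem_range _ _ (by simp)
        simp [h1, h2, h3, h4]
      simp only [this]
      by_cases ha : a = onesF ι <;> by_cases hb : b = onesF κ <;> simp [ha, hb]

/-- the bilinear form polynomial -/
noncomputable def bf {n : ℕ} (B : Matrix (Fin n) (Fin n) ℝ) : MvPolynomial (Fin n ⊕ Fin n) ℝ :=
  ∑ p : Fin n × Fin n, C (B p.1 p.2) * (X (Sum.inl p.1) * X (Sum.inr p.2))

lemma per_eq {n : ℕ} (B : Matrix (Fin n) (Fin n) ℝ) :
    coeff (onesF _) (bf B ^ n) = n.factorial * per B := by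
  classical
  rw [bf, Fintype.sum_pow, coeff_sum]
  rw [← Equiv.sum_comp 
    (Equiv.arrowProdEquivProdArrow (Fin n) (fun _ => Fin n) (fun _ => Fin n)).symm]
  rw [Fintype.sum_prod_type]
  have : ∀ f g : Fin n → Fin n, coeff (onesF (Fin n ⊕ Fin n)) (∏ i, (C (B (f i) (g i)) * (X (Sum.inl (f i)) * X (Sum.inr (g i)))))
     = ((∏ i, B (f i) (g i)) * if Function.Bijective g then 1 else 0) * (if Function.Bijective f then 1 else 0) := by
    intro f g
    rw [Finset.prod_mul_distrib, ← map_prod, coeff_C_mul, Finset.prod_mul_distrib]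
    have := coeff_rename_mul (∏ i, (X (f i) : MvPolynomial _ ℝ)) (∏ i, (X (g i) : MvPolynomial _ ℝ))
    rw [map_prod, map_prod] at this
    simp only [rename_X] at this
    rw [this, coeff_prod_X, coeff_prod_X]; ring
  refine (Finset.sum_congr rfl fun f _ => Finset.sum_congr rfl fun g _ => this f g).trans ?_
  simp only [← Finset.sum_mul]
  simp only [sum_bij_equiv (fun g : Fin n → Fin n => ∏ i, B (_) (g i))]
  rw [sum_bij_equiv (fun f : Fin n → Fin n => ∑ e : Fin n ≃ Fin n, ∏ i, B (f i) (e i))]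
  have : ∀ f : Equiv.Perm (Fin n), ∑ e : Fin n ≃ Fin n, ∏ i, B (f i) (e i) = per B := by
    intro f
    rw [per, ← Equiv.sum_comp (Equiv.mulRight f)]
    refine Finset.sum_congr rfl fun e _ => ?_
    exact Equiv.prod_comp f (fun i => B i (e i))
  refine (Finset.sum_congr rfl fun f _ => this f).trans ?_
  simp [Fintype.card_perm]

/-- linear form -/
noncomputable def lf {n : ℕ} (w : Fin n → ℝ) : MvPolynomial (Fin n) ℝ := ∑ i, C (w i) * X i

lemma bf_eq {n : ℕ} (W : Matrix (Fin n) (Fin n) ℝ) :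
    bf (Wᵀ * W) = ∑ r, rename Sum.inl (lf (W r)) * rename Sum.inr (lf (W r)) := by
  simp only [bf, lf, Matrix.mul_apply, Matrix.transpose_apply, map_sum, map_mul, rename_C, rename_X]
  simp only [Finset.sum_mul, Fintype.sum_prod_type]
  symm
  rw [Finset.sum_comm]
  simp only [Finset.mul_sum]
  refine Finset.sum_congr rfl fun i _ => ?_
  rw [Finset.sum_comm]
  refine Finset.sum_congr rfl fun i _ => ?_
  refine Finset.sum_congr rfl fun i _ => ?_
  ring

lemma qf_block {n : ℕ} (A B : Matrix (Fin n) (Fin n) ℝ) (hB : Bᵀ = B) (l : ℝ) :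
    qf (Matrix.fromBlocks (l • A) B B A) =
      C 2 * bf B + (C l * rename Sum.inl (qf A) + rename Sum.inr (qf A)) := by
  have hs : ∀ i j, B i j = B j i := fun i j => (congrFun (congrFun hB i) j).symm
  have h2 : (C 2 : MvPolynomial (Fin n ⊕ Fin n) ℝ) = 1 + 1 := by
    rw [show (2:ℝ) = 1 + 1 by norm_num, C_add, C_1]
  simp only [qf, bf, Fintype.sum_prod_type, Fintype.sum_sum_type, Matrix.fromBlocks_apply₁₁,
    Matrix.fromBlocks_apply₁₂, Matrix.fromBlocks_apply₂₁, Matrix.fromBlocks_apply₂₂,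
    Finset.sum_add_distrib, Matrix.smul_apply, smul_eq_mul, map_sum, map_mul, rename_C, rename_X,
    Finset.mul_sum, h2, add_mul, one_mul]
  have h3 : ∑ i, ∑ j, C (B i j) * (X (Sum.inr i) * X (Sum.inl j) : MvPolynomial (Fin n ⊕ Fin n) ℝ)
     = ∑ i, ∑ j, C (B i j) * (X (Sum.inl i) * X (Sum.inr j)) := by
    rw [Finset.sum_comm]
    refine Finset.sum_congr rfl fun i _ => Finset.sum_congr rfl fun j _ => ?_
    rw [hs j i]; ring
  rw [h3]
  simp only [mul_assoc]
  ring

noncomputable def FF {n : ℕ} (A W : Matrix (Fin n) (Fin n) ℝ) (a c : ℕ) (r : Fin c → Fin n) : ℝ :=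
  coeff (onesF (Fin n)) (qf A ^ a * ∏ s, lf (W (r s)))

lemma term_eq {n : ℕ} (A W : Matrix (Fin n) (Fin n) ℝ) (a b c : ℕ) :
    coeff (onesF _) (bf (Wᵀ * W) ^ c * (rename Sum.inl (qf A) ^ a * rename Sum.inr (qf A) ^ b)) =
      ∑ r : Fin c → Fin n, FF A W a c r * FF A W b c r := by
  rw [bf_eq, Fintype.sum_pow, Finset.sum_mul, coeff_sum]
  refine Finset.sum_congr rfl fun r _ => ?_
  rw [FF, FF, ← coeff_rename_mul, Finset.prod_mul_distrib]
  simp only [map_mul, map_pow, map_prod]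
  congr 1; ring

lemma FF_zero {n : ℕ} (A W : Matrix (Fin n) (Fin n) ℝ) (a c : ℕ) (r : Fin c → Fin n)
    (h : 2 * a + c ≠ n) : FF A W a c r = 0 := by
  have h1 : (qf A).IsHomogeneous 2 := by
    refine IsHomogeneous.sum _ _ _ fun p _ => ?_
    simpa using (isHomogeneous_C _ (A p.1 p.2)).mul ((isHomogeneous_X ℝ p.1).mul (isHomogeneous_X ℝ p.2))
  have h2 : ∀ w : Fin n → ℝ, (lf w).IsHomogeneous 1 := by
    intro w
    refine IsHomogeneous.sum _ _ _ fun p _ => ?_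
    simpa using (isHomogeneous_C _ (w p)).mul (isHomogeneous_X ℝ p)
  have h3 := (h1.pow a).mul (IsHomogeneous.prod Finset.univ (fun s => lf (W (r s))) (fun _ => 1) (fun s _ => h2 _))
  refine h3.coeff_eq_zero ?_
  have : (onesF (Fin n)).degree = n := by
    simp [Finsupp.degree_eq_sum, onesF_apply]
  rw [this]
  simpa using h.symm

lemma expand {n : ℕ} (A W : Matrix (Fin n) (Fin n) ℝ) (l : ℝ) (hB : (Wᵀ * W)ᵀ = Wᵀ * W) :
    coeff (onesF _) (qf (Matrix.fromBlocks (l • A) (Wᵀ * W) (Wᵀ * W) A) ^ n) =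
      ∑ c ∈ Finset.range (n + 1), ∑ a ∈ Finset.range (n - c + 1),
        2 ^ c * l ^ a * (n - c).choose a * n.choose c *
          ∑ r : Fin c → Fin n, FF A W a c r * FF A W (n - c - a) c r := by
  rw [qf_block _ _ hB, add_pow, coeff_sum]
  refine Finset.sum_congr rfl fun c _ => ?_
  rw [add_pow, Finset.mul_sum, Finset.sum_mul, coeff_sum]
  refine Finset.sum_congr rfl fun a _ => ?_
  rw [← term_eq, ← coeff_C_mul]
  congr 1
  simp only [mul_pow, map_mul, map_pow, map_natCast]
  ring

lemma coeff_qf_pair {n : ℕ} (A : Matrix (Fin n) (Fin n) ℝ) (i j : Fin n) (hij : i ≠ j) :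
    coeff (Finsupp.single i 1 + Finsupp.single j 1) (qf A) = A i j + A j i := by
  classical
  rw [qf, coeff_sum]
  have h : ∀ p : Fin n × Fin n, coeff (Finsupp.single i 1 + Finsupp.single j 1)
      (C (A p.1 p.2) * (X p.1 * X p.2)) =
      (if p = (i, j) then A i j else 0) + (if p = (j, i) then A j i else 0) := by
    rintro ⟨a, b⟩
    rw [coeff_C_mul]
    have h1 : (X a * X b : MvPolynomial (Fin n) ℝ) = monomial (Finsupp.single a 1 + Finsupp.single b 1) 1 := by
      rw [X, X, monomial_mul, one_mul]
    rw [h1, coeff_monomial]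
    have h2 : (Finsupp.single a 1 + Finsupp.single b 1 : Fin n →₀ ℕ) = Finsupp.single i 1 + Finsupp.single j 1 ↔
        (a = i ∧ b = j) ∨ (a = j ∧ b = i) := by
      rw [Finsupp.single_add_single_eq_single_add_single (by norm_num) (by norm_num)]
      simp
    simp only [h2, Prod.mk.injEq]
    by_cases h3 : a = i ∧ b = j
    · obtain ⟨rfl, rfl⟩ := h3
      simp [hij]
    · by_cases h4 : a = j ∧ b = i
      · obtain ⟨rfl, rfl⟩ := h4
        simp [hij.symm]
      · simp [h3, h4]
  rw [Finset.sum_congr rfl fun p _ => h p, Finset.sum_add_distrib]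
  simp

lemma FF_nondeg {n : ℕ} (A W V : Matrix (Fin n) (Fin n) ℝ) (hV : V * W = 1)
    (h : ∀ r : Fin (n - 2) → Fin n, FF A W 1 (n - 2) r = 0) (i j : Fin n) (hij : i ≠ j) :
    A i j + A j i = 0 := by
  classical
  have hX : ∀ k, (X k : MvPolynomial (Fin n) ℝ) = ∑ r, C (V k r) * lf (W r) := by
    intro k
    simp only [lf, Finset.mul_sum]
    rw [Finset.sum_comm]
    simp only [← mul_assoc, ← C_mul]
    simp only [← Finset.sum_mul, ← map_sum]
    have : ∀ x, ∑ r, V k r * W r x = (1 : Matrix (Fin n) (Fin n) ℝ) k x := by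
      intro x; rw [← hV, Matrix.mul_apply]
    simp [this, Matrix.one_apply]
  have h0 : ∀ g : Fin (n - 2) → Fin n, coeff (onesF (Fin n)) (qf A * ∏ s, X (g s)) = 0 := by
    intro g
    simp only [hX]
    rw [Finset.prod_univ_sum, Finset.mul_sum, coeff_sum]
    refine Finset.sum_eq_zero fun r _ => ?_
    rw [Finset.prod_mul_distrib, ← map_prod, mul_left_comm, coeff_C_mul]
    have := h r
    rw [FF, pow_one] at this
    rw [this, mul_zero]
  have hc : (({i, j} : Finset (Fin n))ᶜ).card = n - 2 := by
    rw [Finset.card_compl, Finset.card_pair hij, Fintype.card_fin]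
  have h1 := h0 (fun s => ((Finset.equivFinOfCardEq hc).symm s : Fin n))
  rw [Equiv.prod_comp (Finset.equivFinOfCardEq hc).symm (fun k => (X (k : Fin n) : MvPolynomial (Fin n) ℝ)),
    Finset.prod_coe_sort _ (fun k : Fin n => (X k : MvPolynomial (Fin n) ℝ))] at h1
  have h2 : ∏ k ∈ ({i, j} : Finset (Fin n))ᶜ, (X k : MvPolynomial (Fin n) ℝ) =
      monomial (∑ k ∈ ({i, j} : Finset (Fin n))ᶜ, Finsupp.single k 1) 1 := by
    rw [monomial_sum_one]; rfl
  have h3 : onesF (Fin n) = (Finsupp.single i 1 + Finsupp.single j 1) +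
      ∑ k ∈ ({i, j} : Finset (Fin n))ᶜ, Finsupp.single k 1 := by
    rw [← Finset.sum_pair (f := fun k => Finsupp.single k 1) hij, Finset.sum_add_sum_compl]
    ext k
    simp [onesF_apply, Finsupp.finsetSum_apply, Finsupp.single_apply]
  rw [h2, h3, coeff_mul_monomial, mul_one, coeff_qf_pair A i j hij] at h1
  exact h1

lemma exists_factor {n : ℕ} (B : Matrix (Fin n) (Fin n) ℝ) (hBsymm : Bᵀ = B)
    (hBpd : ∀ x : Fin n → ℝ, x ≠ 0 → 0 < x ⬝ᵥ B *ᵥ x) :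
    ∃ W V : Matrix (Fin n) (Fin n) ℝ, V * W = 1 ∧ B = Wᵀ * W := by
  have hB : B.PosDef := by
    refine Matrix.PosDef.of_dotProduct_mulVec_pos ?_ ?_
    · rw [Matrix.IsHermitian, Matrix.conjTranspose_eq_transpose_of_trivial, hBsymm]
    · intro x hx; simpa using hBpd x hx
  open scoped MatrixOrder in
  obtain ⟨W, hW⟩ := CStarAlgebra.nonneg_iff_eq_star_mul_self.mp hB.posSemidef.nonneg
  rw [Matrix.star_eq_conjTranspose, Matrix.conjTranspose_eq_transpose_of_trivial] at hW
  refine ⟨W, B⁻¹ * Wᵀ, ?_, hW⟩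
  rw [Matrix.mul_assoc, ← hW]
  exact Matrix.nonsing_inv_mul _ ((Matrix.isUnit_iff_isUnit_det _).mp hB.isUnit)

lemma FF_mul_nonneg {n : ℕ} (A W : Matrix (Fin n) (Fin n) ℝ) (a c : ℕ)
    (hc : c ≤ n) (ha : a ≤ n - c) (r : Fin c → Fin n) :
    0 ≤ FF A W a c r * FF A W (n - c - a) c r := by
  by_cases h : n - c - a = a
  · rw [h]; exact mul_self_nonneg _
  · by_cases h1 : 2 * a + c = n
    · omega
    · rw [FF_zero A W a c r h1, zero_mul]

lemma top_term {n : ℕ} (A W : Matrix (Fin n) (Fin n) ℝ) :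
    ∑ r : Fin n → Fin n, FF A W 0 n r * FF A W 0 n r = n.factorial * per (Wᵀ * W) := by
  rw [← per_eq, ← term_eq]
  simp

lemma zero_case {n : ℕ} (A W : Matrix (Fin n) (Fin n) ℝ) :
    coeff (onesF _) (qf (Matrix.fromBlocks ((0 : ℝ) • A) (Wᵀ * W) (Wᵀ * W) A) ^ n) =
      2 ^ n * (n.factorial * per (Wᵀ * W)) := by
  rw [expand A W 0 (by simp), Finset.sum_range_succ, Finset.sum_eq_zero, zero_add, ← top_term A W]
  · simp
  · intro c hc
    rw [Finset.mem_range] at hc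
    refine Finset.sum_eq_zero fun a ha => ?_
    rcases Nat.eq_zero_or_pos a with rfl | h
    · rw [Finset.sum_eq_zero, mul_zero]
      intro r _
      rw [FF_zero A W 0 c r (by omega), zero_mul]
    · rw [zero_pow h.ne']; ring

theorem hafnian_block_eq_per_iff (n : ℕ) (A B : Matrix (Fin n) (Fin n) ℝ)
    (hA : Aᵀ = A) (hBsymm : Bᵀ = B)
    (hBpd : ∀ x : Fin n → ℝ, x ≠ 0 → 0 < x ⬝ᵥ B *ᵥ x)
    (l : ℝ) (hl : 0 ≤ l) :
    haf ((Matrix.fromBlocks (l • A) B B A).submatrix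
        (blockIndex n).symm (blockIndex n).symm) = per B
      ↔ (∀ i j, i ≠ j → A i j = 0) ∨ l = 0 := by
  obtain ⟨W, V, hV, rfl⟩ := exists_factor B hBsymm hBpd
  rw [haf_eq]
  have hpos : (0 : ℝ) < n.factorial * 2 ^ n := by positivity
  have hiff : (1 / (n.factorial * 2 ^ n) : ℝ) * coeff (onesF _)
      (qf (Matrix.fromBlocks (l • A) (Wᵀ * W) (Wᵀ * W) A) ^ n) = per (Wᵀ * W) ↔
      coeff (onesF _) (qf (Matrix.fromBlocks (l • A) (Wᵀ * W) (Wᵀ * W) A) ^ n) =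
        2 ^ n * (n.factorial * per (Wᵀ * W)) := by
    rw [one_div, inv_mul_eq_iff_eq_mul₀ hpos.ne']
    constructor <;> intro h <;> rw [h] <;> ring
  rw [hiff]
  constructor
  · intro h
    by_cases hl0 : l = 0
    · exact Or.inr hl0
    left
    have hlpos : 0 < l := lt_of_le_of_ne hl (Ne.symm hl0)
    intro i j hij
    have hn : 2 ≤ n := by
      have := i.isLt; have := j.isLt
      have : i.val ≠ j.val := fun h => hij (Fin.ext h)
      omega
    rw [expand A W l hBsymm, Finset.sum_range_succ, ← top_term A W] at h
    simp only [Nat.sub_self, zero_add, Finset.range_one, Finset.sum_singleton, pow_zero, mul_one,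
      Nat.choose_self, Nat.cast_one, add_eq_right] at h
    have hnn : ∀ c ∈ Finset.range n, ∀ a ∈ Finset.range (n - c + 1),
        0 ≤ 2 ^ c * l ^ a * (n - c).choose a * n.choose c *
          ∑ r : Fin c → Fin n, FF A W a c r * FF A W (n - c - a) c r := by
      intro c hc a ha
      rw [Finset.mem_range] at hc ha
      have := Finset.sum_nonneg (s := Finset.univ) fun (r : Fin c → Fin n) _ =>
        FF_mul_nonneg A W a c hc.le (by omega) r
      positivity
    rw [Finset.sum_eq_zero_iff_of_nonneg (fun c hc => Finset.sum_nonneg (hnn c hc))] at h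
    have hc : n - 2 ∈ Finset.range n := by rw [Finset.mem_range]; omega
    have h1 := h (n - 2) hc
    rw [Finset.sum_eq_zero_iff_of_nonneg (hnn _ hc)] at h1
    have h2 := h1 1 (by rw [Finset.mem_range]; omega)
    have e1 : n - (n - 2) = 2 := by omega
    have hch : (0 : ℝ) < n.choose (n - 2) := by
      exact_mod_cast Nat.choose_pos (by omega)
    have e2 : n - (n - 2) - 1 = 1 := by omega
    rw [e2, e1] at h2
    have hco : (2 : ℝ) ^ (n - 2) * l ^ 1 * (Nat.choose 2 1 : ℕ) * n.choose (n - 2) ≠ 0 := by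
      have : (0 : ℝ) < (Nat.choose 2 1 : ℕ) := by norm_num
      positivity
    have h3 := (mul_eq_zero.mp h2).resolve_left hco
    rw [Finset.sum_eq_zero_iff_of_nonneg (fun r _ => mul_self_nonneg _)] at h3
    have h4 := FF_nondeg A W V hV (fun r => mul_self_eq_zero.mp (h3 r (Finset.mem_univ _))) i j hij
    have h5 : A j i = A i j := congrFun (congrFun hA i) j
    linarith
  · rintro (h | rfl)
    · rw [← zero_case 0 W]
      apply haf_congr
      rintro (a | a) (b | b) hab
      · simp [h a b (fun e => hab (by rw [e]))]
      · rfl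
      · rfl
      · simp [h a b (fun e => hab (by rw [e]))]
    · exact zero_case A W
end

section
/- Let x_1, ..., x_n be vectors in ℝ^d and let ξ be a random vector distributed according to the standard Gaussian measure on ℝ^d. Then E ∏_{i=1}^n (x_i, ξ)² ≥ ∏_{i=1}^n E (x_i, ξ)² = ∏_{i=1}^n |x_i|², where (·,·) is the standard Euclidean inner product. Equality holds if and only if the vectors x_1, ..., x_n are pairwise orthogonal or at least one of them is zero. -/
open Matrix BigOperators MeasureTheory

namespace GaussProd

open MvPolynomial

/-- One-dimensional standard Gaussian. -/
noncomputable abbrev g1 : Measure ℝ := ProbabilityTheory.gaussianReal 0 1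

/-- Standard Gaussian on `ℝ^d`. -/
noncomputable abbrev gd (d : ℕ) : Measure (Fin d → ℝ) := Measure.pi fun _ : Fin d => g1

lemma integrable_pow (m : ℕ) : Integrable (fun t : ℝ => t ^ m) g1 := by
  have h := ProbabilityTheory.memLp_id_gaussianReal (μ := 0) (v := 1) (m : NNReal)
  have h2 := h.integrable_norm_pow'
  refine h2.mono' (by fun_prop) (Filter.Eventually.of_forall fun t => ?_)
  simp

lemma integrable_pow_pdf (m : ℕ) :
    Integrable (fun t : ℝ => t ^ m * ProbabilityTheory.gaussianPDFReal 0 1 t) := by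
  have h := integrable_pow m
  rw [g1, ProbabilityTheory.gaussianReal_of_var_ne_zero _ one_ne_zero,
    integrable_withDensity_iff (ProbabilityTheory.measurable_gaussianPDF _ _)
      (Filter.Eventually.of_forall fun _ => ProbabilityTheory.gaussianPDF_lt_top)] at h
  simpa using h

lemma hasDerivAt_pdf (t : ℝ) : HasDerivAt (ProbabilityTheory.gaussianPDFReal 0 1)
    (-t * ProbabilityTheory.gaussianPDFReal 0 1 t) t := by
  have : HasDerivAt (fun t : ℝ => (√(2 * Real.pi * 1))⁻¹ * Real.exp (-(t - 0) ^ 2 / (2 * 1)))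
      ((√(2 * Real.pi * 1))⁻¹ * (Real.exp (-(t - 0) ^ 2 / (2 * 1)) * (-(2 * t) / (2 * 1)))) t := by
    apply HasDerivAt.const_mul
    apply HasDerivAt.exp
    apply HasDerivAt.div_const
    apply HasDerivAt.fun_neg
    simpa using (hasDerivAt_pow 2 t)
  have e : ProbabilityTheory.gaussianPDFReal 0 1
      = fun t : ℝ => (√(2 * Real.pi * 1))⁻¹ * Real.exp (-(t - 0) ^ 2 / (2 * 1)) := by
    ext t
    simp [ProbabilityTheory.gaussianPDFReal]
  rw [e]
  convert this using 1
  ring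

/-- One-dimensional Gaussian integration by parts for monomials. -/
lemma stein_pow (m : ℕ) : ∫ t, t ^ (m + 1) ∂g1 = m * ∫ t, t ^ (m - 1) ∂g1 := by
  rw [g1, ProbabilityTheory.integral_gaussianReal_eq_integral_smul one_ne_zero,
    ProbabilityTheory.integral_gaussianReal_eq_integral_smul one_ne_zero]
  have h := integral_mul_deriv_eq_deriv_mul_of_integrable (A := ℝ) (u := fun t : ℝ => t ^ m)
    (u' := fun t => m * t ^ (m - 1))
    (v := ProbabilityTheory.gaussianPDFReal 0 1)
    (v' := fun t => -t * ProbabilityTheory.gaussianPDFReal 0 1 t)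
    (fun t _ => hasDerivAt_pow m t) (fun t _ => hasDerivAt_pdf t)
    (by
      convert (integrable_pow_pdf (m + 1)).neg using 1
      ext t; simp; ring)
    (by
      convert (integrable_pow_pdf (m - 1)).const_mul (m : ℝ) using 1
      ext t; simp; ring)
    (integrable_pow_pdf m)
  rw [← integral_const_mul]
  have h1 : ∀ t : ℝ, t ^ m * (-t * ProbabilityTheory.gaussianPDFReal 0 1 t)
      = -(ProbabilityTheory.gaussianPDFReal 0 1 t • t ^ (m + 1)) := by
    intro t; simp; ring
  simp_rw [h1, integral_neg, neg_inj] at h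
  rw [h]
  congr 1; ext t; simp; ring

variable {d : ℕ}

lemma integrable_monomial (s : Fin d →₀ ℕ) :
    Integrable (fun ξ : Fin d → ℝ => ∏ k, ξ k ^ s k) (gd d) :=
  Integrable.fintype_prod (f := fun k (t : ℝ) => t ^ s k) (fun k => integrable_pow (s k))

lemma integrable_eval (p : MvPolynomial (Fin d) ℝ) :
    Integrable (fun ξ : Fin d → ℝ => eval ξ p) (gd d) := by
  induction p using MvPolynomial.induction_on' with
  | monomial s a =>
    simp only [eval_monomial]
    have := (integrable_monomial s).const_mul a
    refine this.congr (Filter.Eventually.of_forall fun ξ => ?_)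
    simp [Finsupp.prod_fintype]
  | add p q hp hq =>
    simp only [map_add]
    exact hp.add hq

/-- Gaussian expectation of a polynomial. -/
noncomputable def Ex (d : ℕ) : MvPolynomial (Fin d) ℝ →ₗ[ℝ] ℝ where
  toFun p := ∫ ξ, eval ξ p ∂(gd d)
  map_add' p q := by
    simp only [map_add]
    exact integral_add (integrable_eval p) (integrable_eval q)
  map_smul' a p := by
    simp only [smul_eval, RingHom.id_apply, smul_eq_mul]
    exact integral_const_mul _ _

lemma Ex_apply (p : MvPolynomial (Fin d) ℝ) : Ex d p = ∫ ξ, eval ξ p ∂(gd d) := rfl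

lemma Ex_one : Ex d 1 = 1 := by simp [Ex_apply]

lemma Ex_sq_nonneg (p : MvPolynomial (Fin d) ℝ) : 0 ≤ Ex d (p * p) := by
  rw [Ex_apply]
  apply integral_nonneg
  intro ξ
  simpa using mul_self_nonneg _

lemma Ex_monomial (s : Fin d →₀ ℕ) (a : ℝ) :
    Ex d (monomial s a) = a * ∏ k, ∫ t, t ^ s k ∂g1 := by
  rw [Ex_apply, ← integral_fintype_prod_eq_prod (fun k (t : ℝ) => t ^ s k), ← integral_const_mul]
  congr 1; ext ξ
  simp [eval_monomial, Finsupp.prod_fintype]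

lemma stein_X (k : Fin d) (p : MvPolynomial (Fin d) ℝ) : Ex d (X k * p) = Ex d (pderiv k p) := by
  induction p using MvPolynomial.induction_on' with
  | monomial s a =>
    rw [pderiv_monomial, Ex_monomial, X, monomial_mul, Ex_monomial,
      ← Finset.mul_prod_erase _ (fun j => ∫ t, t ^ ((Finsupp.single k 1 + s : Fin d →₀ ℕ) j) ∂g1)
        (Finset.mem_univ k),
      ← Finset.mul_prod_erase _ (fun j => ∫ t, t ^ ((s - Finsupp.single k 1 : Fin d →₀ ℕ) j) ∂g1)
        (Finset.mem_univ k)]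
    have e1 : ∏ j ∈ Finset.univ.erase k, ∫ t, t ^ ((Finsupp.single k 1 + s : Fin d →₀ ℕ) j) ∂g1
        = ∏ j ∈ Finset.univ.erase k, ∫ t, t ^ ((s - Finsupp.single k 1 : Fin d →₀ ℕ) j) ∂g1 := by
      apply Finset.prod_congr rfl
      intro j hj
      have hj : k ≠ j := fun h => (Finset.ne_of_mem_erase hj) h.symm
      simp [hj]
    rw [e1]
    have e2 : (Finsupp.single k 1 + s : Fin d →₀ ℕ) k = s k + 1 := by simp [add_comm]
    have e3 : (s - Finsupp.single k 1 : Fin d →₀ ℕ) k = s k - 1 := by simp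
    rw [e2, e3, stein_pow]
    ring
  | add p q hp hq => simp only [mul_add, map_add, hp, hq]

/-- The linear form. -/
noncomputable def L (x : Fin d → ℝ) : MvPolynomial (Fin d) ℝ := ∑ k, C (x k) * X k

/-- The inner product. -/
def ip (x y : Fin d → ℝ) : ℝ := ∑ k, x k * y k

/-- Directional derivative. -/
noncomputable def D (x : Fin d → ℝ) :
    Derivation ℝ (MvPolynomial (Fin d) ℝ) (MvPolynomial (Fin d) ℝ) := ∑ k, x k • pderiv k

lemma D_apply (x : Fin d → ℝ) (p : MvPolynomial (Fin d) ℝ) :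
    D x p = ∑ k, x k • pderiv k p := by
  have h : ∀ s : Finset (Fin d), (∑ k ∈ s, x k • pderiv (R := ℝ) k) p
      = ∑ k ∈ s, x k • pderiv k p := by
    intro s
    induction s using Finset.induction_on with
    | empty => simp
    | insert a s ha ih => simp [Finset.sum_insert ha, ih]
  exact h _

lemma D_mul (x : Fin d → ℝ) (p q : MvPolynomial (Fin d) ℝ) :
    D x (p * q) = D x p * q + p * D x q := by
  rw [Derivation.leibniz]; simp only [smul_eq_mul]; ring

lemma D_L (x y : Fin d → ℝ) : D x (L y) = C (ip x y) := by
  simp [D_apply, L, ip, pderiv_X, Pi.single_apply, smul_eq_C_mul, mul_comm]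

lemma stein (x : Fin d → ℝ) (p : MvPolynomial (Fin d) ℝ) : Ex d (L x * p) = Ex d (D x p) := by
  simp only [L, Finset.sum_mul, map_sum, D_apply, map_smul, ← smul_eq_C_mul, smul_mul_assoc, stein_X]

/-- Creation operator. -/
noncomputable def A (x : Fin d → ℝ) (p : MvPolynomial (Fin d) ℝ) : MvPolynomial (Fin d) ℝ :=
  L x * p - D x p

lemma adj (x : Fin d → ℝ) (p q : MvPolynomial (Fin d) ℝ) :
    Ex d (A x p * q) = Ex d (p * D x q) := by
  rw [A, sub_mul, map_sub, mul_assoc, stein, D_mul, map_add]; ring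

/-- Wick product. -/
noncomputable def H : List (Fin d → ℝ) → MvPolynomial (Fin d) ℝ
  | [] => 1
  | x :: l => A x (H l)

/-- Ordinary product. -/
noncomputable def P (l : List (Fin d → ℝ)) : MvPolynomial (Fin d) ℝ := (l.map L).prod

lemma Ex_C_mul (a : ℝ) (p : MvPolynomial (Fin d) ℝ) : Ex d (C a * p) = a * Ex d p := by
  rw [← smul_eq_C_mul, map_smul, smul_eq_mul]

lemma norm_A (x : Fin d → ℝ) (p : MvPolynomial (Fin d) ℝ) :
    Ex d (A x p * A x p) = ip x x * Ex d (p * p) + Ex d (D x p * D x p) := by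
  have h : p * D x (A x p) = C (ip x x) * (p * p) + A x (D x p) * p := by
    rw [A, map_sub, D_mul, D_L, A]; ring
  rw [adj, h, map_add, Ex_C_mul, adj]

/-- Polynomials killed by `n` directional derivatives. -/
def K : ℕ → MvPolynomial (Fin d) ℝ → Prop
  | 0, p => p = 0
  | n + 1, p => ∀ x, K n (D x p)

lemma K_zero (n : ℕ) : K n (0 : MvPolynomial (Fin d) ℝ) := by
  induction n with
  | zero => rfl
  | succ n ih => intro x; simpa using ih

lemma K_add {n : ℕ} : ∀ {p q : MvPolynomial (Fin d) ℝ}, K n p → K n q → K n (p + q) := by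
  induction n with
  | zero => intro p q hp hq; simp_all [K]
  | succ n ih => intro p q hp hq x; rw [map_add]; exact ih (hp x) (hq x)

lemma K_smul {n : ℕ} (a : ℝ) : ∀ {p : MvPolynomial (Fin d) ℝ}, K n p → K n (a • p) := by
  induction n with
  | zero => intro p hp; simp_all [K]
  | succ n ih => intro p hp x; rw [Derivation.map_smul]; exact ih (hp x)

lemma K_sub {n : ℕ} {p q : MvPolynomial (Fin d) ℝ} (hp : K n p) (hq : K n q) : K n (p - q) := by
  have := K_add hp (K_smul (-1) hq)
  simpa [sub_eq_add_neg] using this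

lemma K_succ {n : ℕ} : ∀ {p : MvPolynomial (Fin d) ℝ}, K n p → K (n + 1) p := by
  induction n with
  | zero => intro p hp; rw [show p = 0 from hp]; exact K_zero _
  | succ n ih => intro p hp x; exact ih (hp x)

lemma K_L {n : ℕ} (y : Fin d → ℝ) : ∀ {p : MvPolynomial (Fin d) ℝ}, K n p → K (n + 1) (L y * p) := by
  induction n with
  | zero => intro p hp; rw [show p = 0 from hp, mul_zero]; exact K_zero _
  | succ n ih =>
    intro p hp x
    rw [D_mul, D_L, ← smul_eq_C_mul]
    exact K_add (K_smul _ hp) (ih (hp x))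

lemma K_H (l : List (Fin d → ℝ)) : K (l.length + 1) (H l) := by
  induction l with
  | nil => intro x; simp [H, K]
  | cons x l ih => exact K_sub (K_L x ih) (K_succ (K_succ (ih x)))

lemma K_diff (l : List (Fin d → ℝ)) : K l.length (P l - H l) := by
  induction l with
  | nil => simp [P, H, K]
  | cons x l ih =>
    have : P (x :: l) - H (x :: l) = L x * (P l - H l) + D x (H l) := by
      simp only [P, H, A, List.map_cons, List.prod_cons]; ring
    rw [this]
    exact K_add (K_L x ih) (K_succ (K_H l x))

lemma Ex_H_mul (l : List (Fin d → ℝ)) : ∀ q, K l.length q → Ex d (H l * q) = 0 := by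
  induction l with
  | nil => intro q hq; rw [show q = 0 from hq]; simp
  | cons x l ih => intro q hq; rw [H, adj]; exact ih _ (hq x)

lemma H_le_P (l : List (Fin d → ℝ)) : Ex d (H l * H l) ≤ Ex d (P l * P l) := by
  have h1 := Ex_H_mul l _ (K_diff l)
  have h2 := Ex_sq_nonneg (P l - H l)
  have : P l * P l = H l * H l + (P l - H l) * (P l - H l) + (2 : ℝ) • (H l * (P l - H l)) := by
    rw [two_smul]; ring
  rw [this, map_add, map_add, map_smul, h1]
  simpa using h2

lemma ip_nonneg (x : Fin d → ℝ) : 0 ≤ ip x x := Finset.sum_nonneg fun _ _ => mul_self_nonneg _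

lemma H_append (l m : List (Fin d → ℝ)) :
    (l.map fun x => ip x x).prod * Ex d (H m * H m) ≤ Ex d (H (l ++ m) * H (l ++ m)) := by
  induction l with
  | nil => simp
  | cons x l ih =>
    simp only [List.map_cons, List.prod_cons, List.cons_append, H, norm_A]
    have := mul_le_mul_of_nonneg_left ih (ip_nonneg x)
    have := Ex_sq_nonneg (D x (H (l ++ m)))
    linarith

lemma H_one (y : Fin d → ℝ) : H [y] = L y := by simp [H, A]

lemma Ex_H_two (x y : Fin d → ℝ) :
    Ex d (H [x, y] * H [x, y]) = ip x x * ip y y + ip x y ^ 2 := by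
  rw [H, norm_A, H_one, D_L, ← H_one, H, norm_A, H]
  rw [Ex_C_mul, ← mul_one (C _), Ex_C_mul]
  simp [Ex_one]; ring

/-- The orthogonal case. -/
lemma Ex_orth (l : List (Fin d → ℝ)) (h : l.Pairwise fun x y => ip x y = 0) :
    Ex d (P l * P l) = (l.map fun x => ip x x).prod := by
  induction l with
  | nil => simp [P, Ex_one]
  | cons x l ih =>
    rw [List.pairwise_cons] at h
    have hD : ∀ m : List (Fin d → ℝ), (∀ y ∈ m, ip x y = 0) → D x (P m) = 0 := by
      intro m
      induction m with
      | nil => intro _; simp [P]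
      | cons y m ihm =>
        intro hm
        have : P (y :: m) = L y * P m := by simp [P]
        rw [this, D_mul, D_L, hm y (by simp), ihm fun z hz => hm z (by simp [hz])]
        simp
    have e : P (x :: l) * P (x :: l) = L x * (L x * (P l * P l)) := by
      simp only [P, List.map_cons, List.prod_cons]; ring
    rw [e, stein, D_mul, D_mul, D_L, hD l h.1]
    simp [Ex_C_mul, ih h.2]

end GaussProd

open GaussProd in
theorem gaussian_prod_squares_ge (d n : ℕ) (x : Fin n → Fin d → ℝ) :
    (∏ i, ∫ ξ : Fin d → ℝ, (∑ k, x i k * ξ k) ^ 2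
        ∂(Measure.pi fun _ : Fin d => ProbabilityTheory.gaussianReal 0 1))
      ≤ ∫ ξ : Fin d → ℝ, ∏ i, (∑ k, x i k * ξ k) ^ 2
          ∂(Measure.pi fun _ : Fin d => ProbabilityTheory.gaussianReal 0 1) ∧
    (∏ i, ∫ ξ : Fin d → ℝ, (∑ k, x i k * ξ k) ^ 2
        ∂(Measure.pi fun _ : Fin d => ProbabilityTheory.gaussianReal 0 1))
      = ∏ i, ∑ k, (x i k) ^ 2 ∧
    ((∫ ξ : Fin d → ℝ, ∏ i, (∑ k, x i k * ξ k) ^ 2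
          ∂(Measure.pi fun _ : Fin d => ProbabilityTheory.gaussianReal 0 1))
        = ∏ i, ∑ k, (x i k) ^ 2
      ↔ (∀ i j, i ≠ j → ∑ k, x i k * x j k = 0) ∨ ∃ i, x i = 0) := by
  have hL : ∀ (y ξ : Fin d → ℝ), MvPolynomial.eval ξ (L y) = ∑ k, y k * ξ k := by
    intro y ξ; simp [L]
  have hip : ∀ i, ∑ k, (x i k) ^ 2 = ip (x i) (x i) := by
    intro i; simp [ip, sq]
  have h1 : ∀ i, ∫ ξ : Fin d → ℝ, (∑ k, x i k * ξ k) ^ 2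
        ∂(Measure.pi fun _ : Fin d => ProbabilityTheory.gaussianReal 0 1) = ip (x i) (x i) := by
    intro i
    have := Ex_orth [x i] (by simp)
    simpa [P, Ex_apply, hL, ← sq] using this
  have h2 : ∫ ξ : Fin d → ℝ, ∏ i, (∑ k, x i k * ξ k) ^ 2
          ∂(Measure.pi fun _ : Fin d => ProbabilityTheory.gaussianReal 0 1)
      = Ex d ((∏ i, L (x i)) * (∏ i, L (x i))) := by
    rw [Ex_apply]
    simp [map_prod, hL, ← sq, Finset.prod_pow]
  have h3 : ∀ s : Finset (Fin n), P (s.toList.map x) = ∏ i ∈ s, L (x i) := by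
    intro s; simp [P, Finset.prod_map_toList, Function.comp_def]
  have h4 : ∀ s : Finset (Fin n), ((s.toList.map x).map fun x => ip x x).prod
      = ∏ i ∈ s, ip (x i) (x i) := by
    intro s; simp [Finset.prod_map_toList, Function.comp_def]
  simp only [h1, h2, hip]
  have hge : ∏ i, ip (x i) (x i) ≤ Ex d ((∏ i, L (x i)) * (∏ i, L (x i))) := by
    have a := H_append (Finset.univ.toList.map x) []
    rw [h4] at a
    have b := H_le_P (Finset.univ.toList.map x)
    rw [h3] at b
    simp only [H, mul_one, Ex_one, List.append_nil] at a
    exact a.trans b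
  refine ⟨hge, trivial, ?_, ?_⟩
  · intro heq
    by_cases hz : ∃ i, x i = 0
    · exact Or.inr hz
    left
    push Not at hz
    intro i j hij
    have hpos : ∀ i, 0 < ip (x i) (x i) := by
      intro i
      refine lt_of_le_of_ne (ip_nonneg _) fun h => hz i ?_
      ext k
      have := (Finset.sum_eq_zero_iff_of_nonneg (fun k _ => mul_self_nonneg (x i k))).1 h.symm k
        (Finset.mem_univ k)
      simpa using this
    have a := H_append (((Finset.univ.erase i).erase j).toList.map x) [x i, x j]
    have b := H_le_P (((Finset.univ.erase i).erase j).toList.map x ++ [x i, x j])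
    have hj : j ∈ Finset.univ.erase i := by simp [hij.symm]
    have hP : P (((Finset.univ.erase i).erase j).toList.map x ++ [x i, x j])
        = ∏ i, L (x i) := by
      have : ∀ l m : List (Fin d → ℝ), P (l ++ m) = P l * P m := by intro l m; simp [P]
      rw [this, h3, ← Finset.mul_prod_erase _ _ (Finset.mem_univ i),
        ← Finset.mul_prod_erase _ _ hj]
      simp [P]; ring
    rw [hP, heq, ← Finset.mul_prod_erase _ _ (Finset.mem_univ i),
        ← Finset.mul_prod_erase _ _ hj] at b
    rw [h4, Ex_H_two] at a
    have hp : 0 < ∏ k ∈ (Finset.univ.erase i).erase j, ip (x k) (x k) :=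
      Finset.prod_pos fun k _ => hpos k
    have c : (∏ k ∈ (Finset.univ.erase i).erase j, ip (x k) (x k)) * ip (x i) (x j) ^ 2 ≤ 0 := by
      nlinarith
    have : ip (x i) (x j) ^ 2 ≤ 0 := by
      by_contra hc
      push Not at hc
      exact absurd c (not_le.2 (mul_pos hp hc))
    exact pow_eq_zero_iff two_ne_zero |>.1 (le_antisymm this (sq_nonneg _))
  · rintro (h | ⟨i, hi⟩)
    · have := Ex_orth (Finset.univ.toList.map x) (by
        rw [List.pairwise_map]
        exact (Finset.nodup_toList _).imp fun hab => h _ _ hab)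
      rwa [h3, h4] at this
    · have e1 : L (x i) = 0 := by simp [L, hi]
      have e2 : ip (x i) (x i) = 0 := by simp [ip, hi]
      rw [Finset.prod_eq_zero (Finset.mem_univ i) e1, Finset.prod_eq_zero (Finset.mem_univ i) e2]
      simp
end

section
/- Let x_1, ..., x_n be unit vectors in ℝ^d (with d ≥ 1). Then the average of the function ξ ↦ ∏_{i=1}^n (x_i, ξ)² over the unit sphere {ξ ∈ ℝ^d : |ξ| = 1} (with respect to the normalized uniform/rotation-invariant measure on the sphere) is at least Γ(d/2) / (2^n Γ(d/2 + n)) = 1/(d(d+2)(d+4)⋯(d+2n−2)), with equality if and only if the vectors x_1, ..., x_n are pairwise orthogonal. -/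
open MeasureTheory BigOperators
open scoped RealInnerProductSpace

/-- The uniform (rotation-invariant) probability measure on the unit sphere of `ℝ^d`:
the normalization of the canonical sphere measure obtained from Lebesgue measure. -/
noncomputable def sphereUniform (d : ℕ) :
    Measure (Metric.sphere (0 : EuclideanSpace ℝ (Fin d)) 1) :=
  ((volume : Measure (EuclideanSpace ℝ (Fin d))).toSphere Set.univ)⁻¹ •
    (volume : Measure (EuclideanSpace ℝ (Fin d))).toSphere


namespace SphereAvg

open MvPolynomial

/-- The linear form attached to a vector. -/
noncomputable def lin {d : ℕ} (x : Fin d → ℝ) : MvPolynomial (Fin d) ℝ := ∑ i, C (x i) * X i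

/-- The directional derivative. -/
noncomputable def dir {d : ℕ} (x : Fin d → ℝ) :
    Derivation ℝ (MvPolynomial (Fin d) ℝ) (MvPolynomial (Fin d) ℝ) := ∑ i, x i • pderiv i

/-- The Laplacian. -/
noncomputable def lap {d : ℕ} (p : MvPolynomial (Fin d) ℝ) : MvPolynomial (Fin d) ℝ :=
  ∑ i, pderiv i (pderiv i p)

/-- The Fischer form in degree `n`. -/
noncomputable def fis {d : ℕ} : ℕ → MvPolynomial (Fin d) ℝ → MvPolynomial (Fin d) ℝ → ℝ
  | 0, p, q => constantCoeff p * constantCoeff q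
  | n + 1, p, q => (1 / ((n : ℝ) + 1)) * ∑ i, fis n (pderiv i p) (pderiv i q)

variable {d : ℕ}

lemma pderiv_comm' (i j : Fin d) (p : MvPolynomial (Fin d) ℝ) :
    pderiv i (pderiv j p) = pderiv j (pderiv i p) := by
  have h : ⁅(pderiv i : Derivation ℝ (MvPolynomial (Fin d) ℝ) (MvPolynomial (Fin d) ℝ)),
      (pderiv j : Derivation ℝ (MvPolynomial (Fin d) ℝ) (MvPolynomial (Fin d) ℝ))⁆ = 0 := by
    apply MvPolynomial.derivation_ext
    intro k
    simp [Derivation.commutator_apply, pderiv_X, Pi.single_apply, apply_ite]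
  have := DFunLike.congr_fun h p
  rw [Derivation.commutator_apply] at this
  exact sub_eq_zero.mp this

lemma dir_apply (x : Fin d → ℝ) (p : MvPolynomial (Fin d) ℝ) :
    dir x p = ∑ i, x i • pderiv i p := by
  have h : ∀ s : Finset (Fin d), (∑ i ∈ s, x i • (pderiv i :
      Derivation ℝ (MvPolynomial (Fin d) ℝ) (MvPolynomial (Fin d) ℝ))) p
        = ∑ i ∈ s, x i • pderiv i p := by
    intro s
    induction s using Finset.cons_induction with
    | empty => simp
    | cons a s ha ih =>
      rw [Finset.sum_cons, Finset.sum_cons, Derivation.add_apply, ih, Derivation.smul_apply]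
  exact h _

lemma pderiv_dir (x : Fin d → ℝ) (i : Fin d) (p : MvPolynomial (Fin d) ℝ) :
    pderiv i (dir x p) = dir x (pderiv i p) := by
  simp [dir_apply, pderiv_comm' i]

lemma pderiv_lin (x : Fin d → ℝ) (i : Fin d) : pderiv i (lin x) = C (x i) := by
  simp [lin, pderiv_X, Pi.single_apply]

lemma dir_lin (x y : Fin d → ℝ) : dir x (lin y) = C (∑ i, x i * y i) := by
  simp [dir_apply, pderiv_lin, smul_eq_C_mul]

lemma lin_hom (x : Fin d → ℝ) : (lin x).IsHomogeneous 1 := by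
  apply IsHomogeneous.sum
  intro i _
  simpa using (isHomogeneous_C (Fin d) (x i)).mul (isHomogeneous_X ℝ i)

lemma pderiv_hom {n : ℕ} {p : MvPolynomial (Fin d) ℝ} (hp : p.IsHomogeneous (n + 1)) (i : Fin d) :
    (pderiv i p).IsHomogeneous n := hp.pderiv

lemma dir_hom {n : ℕ} {p : MvPolynomial (Fin d) ℝ} (hp : p.IsHomogeneous (n + 1))
    (x : Fin d → ℝ) : (dir x p).IsHomogeneous n := by
  rw [dir_apply]
  apply IsHomogeneous.sum
  intro i _
  rw [smul_eq_C_mul]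
  simpa using (isHomogeneous_C (Fin d) (x i)).mul (pderiv_hom hp i)

lemma prod_hom {n : ℕ} (x : Fin n → Fin d → ℝ) : (∏ i, lin (x i)).IsHomogeneous n := by
  simpa using IsHomogeneous.prod Finset.univ (fun i => lin (x i)) (fun _ => 1)
    (fun i _ => lin_hom (x i))

lemma hom_zero {p : MvPolynomial (Fin d) ℝ} (hp : p.IsHomogeneous 0) :
    p = C (constantCoeff p) := by
  have := (totalDegree_eq_zero_iff_eq_C (p := p)).mp (by
    by_cases h : p = 0
    · simp [h]
    · exact hp.totalDegree h)
  simpa [constantCoeff_eq] using this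

lemma fis_add_left (n : ℕ) (p p' q : MvPolynomial (Fin d) ℝ) :
    fis n (p + p') q = fis n p q + fis n p' q := by
  induction n generalizing p p' q with
  | zero => simp [fis, add_mul]
  | succ n ih => simp [fis, ih, Finset.sum_add_distrib, mul_add]

lemma fis_smul_left (n : ℕ) (c : ℝ) (p q : MvPolynomial (Fin d) ℝ) :
    fis n (c • p) q = c * fis n p q := by
  induction n generalizing p q with
  | zero => simp [fis, mul_assoc]
  | succ n ih => simp [fis, ih, ← Finset.mul_sum]; ring

lemma fis_symm (n : ℕ) (p q : MvPolynomial (Fin d) ℝ) : fis n p q = fis n q p := by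
  induction n generalizing p q with
  | zero => simp [fis, mul_comm]
  | succ n ih => simp only [fis]; congr 1; exact Finset.sum_congr rfl fun i _ => ih _ _

lemma fis_add_right (n : ℕ) (p q q' : MvPolynomial (Fin d) ℝ) :
    fis n p (q + q') = fis n p q + fis n p q' := by
  rw [fis_symm, fis_add_left, fis_symm n q, fis_symm n q']

lemma fis_smul_right (n : ℕ) (c : ℝ) (p q : MvPolynomial (Fin d) ℝ) :
    fis n p (c • q) = c * fis n p q := by
  rw [fis_symm, fis_smul_left, fis_symm]

lemma fis_zero_right (n : ℕ) (p : MvPolynomial (Fin d) ℝ) : fis n p 0 = 0 := by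
  simpa using fis_smul_right n 0 p 0

lemma fis_sum_right (n : ℕ) (p : MvPolynomial (Fin d) ℝ) (q : Fin d → MvPolynomial (Fin d) ℝ)
    (s : Finset (Fin d)) : fis n p (∑ i ∈ s, q i) = ∑ i ∈ s, fis n p (q i) := by
  induction s using Finset.cons_induction with
  | empty => simp [fis_zero_right]
  | cons a s ha ih => rw [Finset.sum_cons, Finset.sum_cons, fis_add_right, ih]

lemma fis_nonneg (n : ℕ) (p : MvPolynomial (Fin d) ℝ) : 0 ≤ fis n p p := by
  induction n generalizing p with
  | zero => exact mul_self_nonneg _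
  | succ n ih => 
    simp only [fis]
    have := Finset.sum_nonneg fun i (_ : i ∈ Finset.univ) => ih (pderiv i p)
    positivity

lemma fis_def {n : ℕ} {p : MvPolynomial (Fin d) ℝ} (hp : p.IsHomogeneous n)
    (h : fis n p p = 0) : p = 0 := by
  induction n generalizing p with
  | zero => 
    rw [hom_zero hp]
    simpa [fis] using h
  | succ n ih =>
    simp only [fis, mul_eq_zero] at h
    have h1 : ((1 : ℝ) / (n + 1)) ≠ 0 := by positivity
    have h2 := h.resolve_left h1
    rw [Finset.sum_eq_zero_iff_of_nonneg fun i _ => fis_nonneg _ _] at h2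
    have h3 : ∀ i, pderiv i p = 0 := fun i => ih (pderiv_hom hp i) (h2 i (Finset.mem_univ _))
    have := hp.sum_X_mul_pderiv
    simp only [h3, mul_zero, Finset.sum_const_zero] at this
    have h4 := this.symm
    rw [nsmul_eq_mul, mul_eq_zero] at h4
    refine h4.resolve_left ?_
    exact_mod_cast Nat.succ_ne_zero n

lemma fis_adj (n : ℕ) (x : Fin d → ℝ) (p q : MvPolynomial (Fin d) ℝ) :
    fis (n + 1) (lin x * p) q = fis n p (dir x q) := by
  induction n generalizing p q with
  | zero => 
    have h0 : constantCoeff (lin x) = 0 := by simp [lin]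
    simp only [fis, Derivation.leibniz, pderiv_lin, dir_apply, map_sum, smul_eq_mul, map_add,
      map_mul, h0, constantCoeff_C, constantCoeff_smul, Finset.mul_sum]
    apply Finset.sum_congr rfl
    intro i _
    simp
    ring
  | succ n ih =>
    have key : ∀ i, fis (n + 1) (pderiv i (lin x * p)) (pderiv i q)
        = fis (n + 1) p (x i • pderiv i q) + fis n (pderiv i p) (pderiv i (dir x q)) := by
      intro i
      rw [Derivation.leibniz, pderiv_lin, fis_add_left, smul_eq_mul, smul_eq_mul, ih, mul_comm p,
        ← smul_eq_C_mul, fis_smul_left, fis_smul_right, pderiv_dir]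
      ring
    rw [fis]
    simp only [key]
    rw [Finset.sum_add_distrib, ← fis_sum_right, ← dir_apply]
    have : ∑ i, fis n (pderiv i p) (pderiv i (dir x q)) = ((n : ℝ) + 1) * fis (n + 1) p (dir x q) := by
      rw [fis]; field_simp
    rw [this]
    push_cast
    field_simp
    ring

lemma fis_step_zero (x : Fin d → ℝ) (p : MvPolynomial (Fin d) ℝ) :
    fis 1 (lin x * p) (lin x * p) = (∑ i, x i * x i) * fis 0 p p := by
  have h0 : constantCoeff (lin x) = 0 := by simp [lin]
  rw [fis_adj, Derivation.leibniz, dir_lin, smul_eq_mul, smul_eq_mul]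
  simp only [fis, map_add, map_mul, h0, constantCoeff_C]
  ring

lemma fis_step (n : ℕ) (x : Fin d → ℝ) (p : MvPolynomial (Fin d) ℝ) :
    fis (n + 2) (lin x * p) (lin x * p) = (∑ i, x i * x i) * fis (n + 1) p p
      + fis n (dir x p) (dir x p) := by
  rw [fis_adj, Derivation.leibniz, dir_lin, smul_eq_mul, smul_eq_mul, mul_comm p, ← smul_eq_C_mul,
    fis_add_right, fis_smul_right, fis_symm _ p, fis_adj]
  ring

lemma dir_prod {n : ℕ} (x : Fin d → ℝ) (y : Fin n → Fin d → ℝ) :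
    dir x (∏ i, lin (y i)) = ∑ j, C (∑ i, x i * y j i) * ∏ k ∈ Finset.univ.erase j, lin (y k) := by
  have h : ∀ s : Finset (Fin n), dir x (∏ i ∈ s, lin (y i))
      = ∑ j ∈ s, C (∑ i, x i * y j i) * ∏ k ∈ s.erase j, lin (y k) := by
    intro s
    induction s using Finset.cons_induction with
    | empty => simp
    | cons a s ha ih =>
      rw [Finset.prod_cons, Derivation.leibniz, ih, dir_lin, Finset.sum_cons, Finset.cons_eq_insert,
        Finset.erase_insert ha, smul_eq_mul, smul_eq_mul, Finset.mul_sum, add_comm, mul_comm]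
      congr 1
      apply Finset.sum_congr rfl
      intro j hj
      have hja : a ≠ j := fun h => ha (h ▸ hj)
      rw [Finset.erase_insert_of_ne hja, Finset.prod_insert (by simp [ha])]
      ring
  exact h _

lemma eval_lin (x y : Fin d → ℝ) : eval y (lin x) = ∑ i, x i * y i := by
  simp [lin]

lemma orth_of_dir {n : ℕ} (x : Fin d → ℝ) (y : Fin n → Fin d → ℝ)
    (hy : ∀ i, ∑ k, y i k * y i k = 1) (ho : ∀ i j, i ≠ j → ∑ k, y i k * y j k = 0)
    (h : dir x (∏ i, lin (y i)) = 0) (j : Fin n) : ∑ k, x k * y j k = 0 := by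
  have h1 := congrArg (eval (∑ k ∈ Finset.univ.erase j, y k)) h
  have ev : ∀ i, eval (∑ k ∈ Finset.univ.erase j, y k) (lin (y i)) = if i = j then 0 else 1 := by
    intro i
    rw [eval_lin]
    simp only [Finset.sum_apply, Finset.mul_sum]
    rw [Finset.sum_comm]
    have : ∀ k, ∑ l, y i l * y k l = if i = k then 1 else 0 := by
      intro k
      split_ifs with hk
      · subst hk; exact hy i
      · exact ho i k hk
    simp only [this]
    simp
  rw [dir_prod, map_sum, Finset.sum_eq_single j] at h1
  · simp only [map_mul, eval_C, map_prod, ev, map_zero] at h1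
    rw [Finset.prod_congr rfl (g := fun _ => (1 : ℝ))] at h1
    · simpa using h1
    · intro k hk
      simp [Finset.ne_of_mem_erase hk]
  · intro k _ hk
    simp only [map_mul, map_prod, ev]
    rw [Finset.prod_eq_zero (i := j)]
    · simp
    · simp [hk.symm]
    · simp
  · simp

lemma fis_prod {n : ℕ} (y : Fin n → Fin d → ℝ) (hy : ∀ i, ∑ k, y i k * y i k = 1) :
    1 ≤ fis n (∏ i, lin (y i)) (∏ i, lin (y i)) ∧
    (fis n (∏ i, lin (y i)) (∏ i, lin (y i)) = 1 → ∀ i j, i ≠ j → ∑ k, y i k * y j k = 0) := by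
  induction n with
  | zero => simp [fis]
  | succ n ih =>
    rw [Fin.prod_univ_succ]
    obtain ⟨h1, h2⟩ := ih (fun i => y i.succ) (fun i => hy _)
    cases n with
    | zero =>
      rw [fis_step_zero, hy, one_mul]
      refine ⟨h1, fun _ i j hij => ?_⟩
      exact absurd (Subsingleton.elim (α := Fin 1) i j) hij
    | succ m =>
      rw [fis_step, hy, one_mul]
      have h3 := fis_nonneg m (dir (y 0) (∏ i : Fin (m + 1), lin (y i.succ)))
      refine ⟨by linarith, fun h => ?_⟩
      have h4 := h2 (by linarith)
      have h5 := fis_def (dir_hom (prod_hom _) _) (le_antisymm (by linarith) h3)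
      have h6 := orth_of_dir (y 0) _ (fun i => hy _) h4 h5
      intro i j
      induction i using Fin.cases with
      | zero =>
        induction j using Fin.cases with
        | zero => simp
        | succ j => exact fun _ => h6 j
      | succ i =>
        induction j using Fin.cases with
        | zero => 
          intro _
          simp only [mul_comm (y i.succ _)]
          exact h6 i
        | succ j => 
          intro hij
          exact h4 i j (fun h => hij (by rw [h]))

section E

lemma euler (E : MvPolynomial (Fin d) ℝ →ₗ[ℝ] ℝ)
    (hE : ∀ i p, E (X i * p) = E (pderiv i p))
    {n : ℕ} {p : MvPolynomial (Fin d) ℝ} (hp : p.IsHomogeneous n)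
    (q : MvPolynomial (Fin d) ℝ) :
    n * E (p * q) = E (lap p * q) + ∑ i, E (pderiv i p * pderiv i q) := by
  have h := hp.sum_X_mul_pderiv
  have : (n : ℝ) * E (p * q) = E ((n • p) * q) := by
    rw [smul_mul_assoc, map_nsmul, nsmul_eq_mul]
  rw [this, ← h, Finset.sum_mul, map_sum, lap, Finset.sum_mul, map_sum, ← Finset.sum_add_distrib]
  apply Finset.sum_congr rfl
  intro i _
  rw [mul_assoc, hE, Derivation.leibniz, map_add, smul_eq_mul, smul_eq_mul, add_comm,
    mul_comm q]

lemma pderiv_lap (i : Fin d) (p : MvPolynomial (Fin d) ℝ) :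
    pderiv i (lap p) = lap (pderiv i p) := by
  simp only [lap, map_sum]
  exact Finset.sum_congr rfl fun j _ => by rw [pderiv_comm' i, pderiv_comm' i j]

lemma lap_nonneg (E : MvPolynomial (Fin d) ℝ →ₗ[ℝ] ℝ)
    (hE : ∀ i p, E (X i * p) = E (pderiv i p))
    (hpos : ∀ p, 0 ≤ E (p * p))
    {n : ℕ} {p : MvPolynomial (Fin d) ℝ} (hp : p.IsHomogeneous n) :
    0 ≤ E (p * lap p) := by
  induction n generalizing p with
  | zero =>
    rw [hom_zero hp]
    simp [lap]
  | succ n ih =>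
    have h := euler E hE hp (lap p)
    have h2 : 0 ≤ ∑ i, E (pderiv i p * pderiv i (lap p)) := by
      apply Finset.sum_nonneg
      intro i _
      rw [pderiv_lap]
      exact ih (pderiv_hom hp i)
    have h3 := hpos (lap p)
    have h4 : 0 ≤ ((n + 1 : ℕ) : ℝ) * E (p * lap p) := by rw [h]; linarith
    exact nonneg_of_mul_nonneg_right h4 (by positivity)

lemma fis_le (E : MvPolynomial (Fin d) ℝ →ₗ[ℝ] ℝ)
    (hE : ∀ i p, E (X i * p) = E (pderiv i p))
    (hpos : ∀ p, 0 ≤ E (p * p))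
    (h1 : E 1 = 1)
    {n : ℕ} {p : MvPolynomial (Fin d) ℝ} (hp : p.IsHomogeneous n) :
    fis n p p ≤ E (p * p) := by
  induction n generalizing p with
  | zero =>
    apply le_of_eq
    rw [hom_zero hp, ← C_mul, C_eq_smul_one (a := constantCoeff p * constantCoeff p), map_smul, h1]
    simp [fis]
  | succ n ih =>
    have h := euler E hE hp p
    have h2 := lap_nonneg E hE hpos hp
    rw [mul_comm] at h2
    have h3 : ∑ i, fis n (pderiv i p) (pderiv i p) ≤ ∑ i, E (pderiv i p * pderiv i p) :=
      Finset.sum_le_sum fun i _ => ih (pderiv_hom hp i)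
    rw [fis, one_div, inv_mul_le_iff₀ (by positivity)]
    push_cast at h
    linarith

lemma E_lin (E : MvPolynomial (Fin d) ℝ →ₗ[ℝ] ℝ)
    (hE : ∀ i p, E (X i * p) = E (pderiv i p))
    (x : Fin d → ℝ) (p : MvPolynomial (Fin d) ℝ) : E (lin x * p) = E (dir x p) := by
  simp only [lin, Finset.sum_mul, map_sum, dir_apply, ← smul_eq_C_mul, smul_mul_assoc, map_smul, hE]

lemma E_prod (E : MvPolynomial (Fin d) ℝ →ₗ[ℝ] ℝ)
    (hE : ∀ i p, E (X i * p) = E (pderiv i p))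
    (h1 : E 1 = 1)
    {n : ℕ} (y : Fin n → Fin d → ℝ) (hy : ∀ i, ∑ k, y i k * y i k = 1) 
    (ho : ∀ i j, i ≠ j → ∑ k, y i k * y j k = 0) :
    E ((∏ i, lin (y i)) * ∏ i, lin (y i)) = 1 := by
  induction n with
  | zero => simpa using h1
  | succ n ih =>
    have h2 := ih (fun i => y i.succ) (fun i => hy _)
      (fun i j hij => ho _ _ (fun h => hij (Fin.succ_injective _ h)))
    rw [Fin.prod_univ_succ, mul_assoc, E_lin E hE]
    have h3 : dir (y 0) (∏ i : Fin n, lin (y i.succ)) = 0 := by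
      rw [dir_prod]
      apply Finset.sum_eq_zero
      intro j _
      rw [ho _ _ (Fin.succ_ne_zero j).symm]
      simp
    simp only [Derivation.leibniz, h3, dir_lin, hy]
    simpa using h2

theorem alg_main (E : MvPolynomial (Fin d) ℝ →ₗ[ℝ] ℝ)
    (hE : ∀ i p, E (X i * p) = E (pderiv i p))
    (hpos : ∀ p, 0 ≤ E (p * p))
    (h1 : E 1 = 1)
    {n : ℕ} (y : Fin n → Fin d → ℝ) (hy : ∀ i, ∑ k, y i k * y i k = 1) :
    1 ≤ E ((∏ i, lin (y i)) * ∏ i, lin (y i)) ∧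
    (E ((∏ i, lin (y i)) * ∏ i, lin (y i)) = 1 ↔ ∀ i j, i ≠ j → ∑ k, y i k * y j k = 0) := by
  have h := fis_le E hE hpos h1 (prod_hom y)
  obtain ⟨h2, h3⟩ := fis_prod y hy
  exact ⟨h2.trans h, fun h4 => h3 (by linarith), E_prod E hE h1 y hy⟩

end E

section analysis

open Real Set

/-- The one-dimensional Gaussian weight. -/
noncomputable def gw (t : ℝ) : ℝ := Real.exp (-(1 / 2) * t ^ 2)

lemma gw_int (k : ℕ) : Integrable (fun t : ℝ => t ^ k * gw t) := by
  have := integrable_rpow_mul_exp_neg_mul_sq (b := 1 / 2) (by norm_num) (s := k)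
    (by have : (0 : ℝ) ≤ k := k.cast_nonneg
        linarith)
  simpa [Real.rpow_natCast, gw] using this

lemma gw_deriv (t : ℝ) : HasDerivAt gw (-t * gw t) t := by
  have h := ((hasDerivAt_pow 2 t).const_mul (-(1 / 2 : ℝ))).exp
  have e : -t * gw t = Real.exp (-(1 / 2) * t ^ 2) * (-(1 / 2) * ((2 : ℕ) * t ^ (2 - 1))) := by
    simp [gw]
    ring
  rw [e]
  exact h

lemma gw_rec (k : ℕ) : ∫ t : ℝ, t ^ (k + 1) * gw t = k * ∫ t : ℝ, t ^ (k - 1) * gw t := by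
  have h : ∀ t : ℝ, HasDerivAt (fun t => t ^ k * gw t)
      (k * (t ^ (k - 1) * gw t) - t ^ (k + 1) * gw t) t := by
    intro t
    have e : k * (t ^ (k - 1) * gw t) - t ^ (k + 1) * gw t
        = k * t ^ (k - 1) * gw t + t ^ k * (-t * gw t) := by ring
    rw [e]
    exact (hasDerivAt_pow k t).mul (gw_deriv t)
  have h2 := integral_eq_zero_of_hasDerivAt_of_integrable h
    (((gw_int _).const_mul _).sub (gw_int _)) (gw_int k)
  rw [integral_sub ((gw_int _).const_mul _) (gw_int _), integral_const_mul] at h2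
  linarith

/-- The Gaussian weight. -/
noncomputable def gwd (x : Fin d → ℝ) : ℝ := ∏ i, gw (x i)

lemma eval_mono (m : Fin d →₀ ℕ) (c : ℝ) (x : Fin d → ℝ) :
    eval x (monomial m c) * gwd x = c * ∏ i, (x i ^ m i * gw (x i)) := by
  rw [eval_monomial, Finset.prod_mul_distrib, gwd, Finsupp.prod_fintype _ _ (by simp)]
  ring

lemma poly_int (p : MvPolynomial (Fin d) ℝ) : Integrable (fun x => eval x p * gwd x) := by
  induction p using MvPolynomial.induction_on' with
  | monomial m c =>
    simp only [eval_mono]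
    exact (Integrable.fintype_prod (f := fun i t => t ^ m i * gw t)
      (fun i => gw_int (m i))).const_mul c
  | add p q hp hq =>
    simp only [map_add, add_mul]
    exact hp.add hq

lemma int_mono (m : Fin d →₀ ℕ) (c : ℝ) :
    ∫ x, eval x (monomial m c) * gwd x = c * ∏ i, ∫ t : ℝ, t ^ m i * gw t := by
  simp only [eval_mono]
  rw [integral_const_mul,
    integral_fintype_prod_volume_eq_prod (fun i t => t ^ m i * gw t)]

lemma gw_pos (t : ℝ) : 0 < gw t := Real.exp_pos _

lemma gwd_pos (x : Fin d → ℝ) : 0 < gwd x := Finset.prod_pos fun _ _ => gw_pos _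

/-- The total Gaussian mass. -/
noncomputable def gZ (d : ℕ) : ℝ := ∫ x : Fin d → ℝ, gwd x

lemma gZ_pos : 0 < gZ d := by
  have h := poly_int (1 : MvPolynomial (Fin d) ℝ)
  simp only [map_one, one_mul] at h
  rw [gZ, integral_pos_iff_support_of_nonneg (fun x => (gwd_pos x).le) h]
  have : Function.support (fun x : Fin d → ℝ => gwd x) = univ := by
    ext x; simp [(gwd_pos x).ne']
  rw [this]
  simp [NeZero.pos]

/-- The Gaussian expectation. -/
noncomputable def gE (d : ℕ) : MvPolynomial (Fin d) ℝ →ₗ[ℝ] ℝ where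
  toFun p := (∫ x, eval x p * gwd x) / gZ d
  map_add' p q := by
    simp only [map_add, add_mul]
    rw [integral_add (poly_int p) (poly_int q), add_div]
  map_smul' c p := by
    simp only [smul_eval, mul_assoc, integral_const_mul, smul_eq_mul, RingHom.id_apply]
    ring

lemma gE_one : gE d 1 = 1 := by
  simp only [gE, LinearMap.coe_mk, AddHom.coe_mk, map_one, one_mul]
  exact div_self gZ_pos.ne'

lemma gE_nonneg (p : MvPolynomial (Fin d) ℝ) : 0 ≤ gE d (p * p) := by
  simp only [gE, LinearMap.coe_mk, AddHom.coe_mk, map_mul]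
  refine div_nonneg (integral_nonneg fun x => ?_) gZ_pos.le
  exact mul_nonneg (mul_self_nonneg _) (gwd_pos x).le

lemma gE_ibp (i : Fin d) (p : MvPolynomial (Fin d) ℝ) : gE d (X i * p) = gE d (pderiv i p) := by
  induction p using MvPolynomial.induction_on' with
  | add p q hp hq => simp only [mul_add, map_add, hp, hq]
  | monomial m c =>
    rw [pderiv_monomial, X, monomial_mul, one_mul]
    simp only [gE, LinearMap.coe_mk, AddHom.coe_mk, int_mono]
    congr 1
    rw [mul_assoc]
    congr 1
    rw [← Finset.mul_prod_erase _ _ (Finset.mem_univ i),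
      ← Finset.mul_prod_erase Finset.univ (fun j => ∫ t : ℝ, t ^ (m - Finsupp.single i 1 : Fin d →₀ ℕ) j * gw t)
        (Finset.mem_univ i), ← mul_assoc]
    congr 1
    · simp [add_comm 1, gw_rec]
    · apply Finset.prod_congr rfl
      intro j hj
      have := Finset.ne_of_mem_erase hj
      simp [this.symm]

lemma gwd_norm (x : EuclideanSpace ℝ (Fin d)) : gwd (fun i => x i) = Real.exp (-(1 / 2) * ‖x‖ ^ 2) := by
  rw [EuclideanSpace.norm_sq_eq, Finset.mul_sum, Real.exp_sum]
  simp [gwd, gw]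

lemma polar (hd : 1 ≤ d) (m : ℕ) (f : EuclideanSpace ℝ (Fin d) → ℝ)
    (hf : ∀ (r : ℝ) x, f (r • x) = r ^ m * f x) :
    ∫ x, f x * Real.exp (-(1 / 2) * ‖x‖ ^ 2) =
      (∫ ξ, f (ξ : Metric.sphere (0 : EuclideanSpace ℝ (Fin d)) 1)
        ∂(volume : Measure (EuclideanSpace ℝ (Fin d))).toSphere) *
      ((1 / 2 : ℝ) ^ (-((d : ℝ) / 2 + m / 2)) * (1 / 2) * Real.Gamma ((d : ℝ) / 2 + m / 2)) := by
  have : Nonempty (Fin d) := ⟨⟨0, hd⟩⟩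
  set g : Metric.sphere (0 : EuclideanSpace ℝ (Fin d)) 1 × Ioi (0 : ℝ) → ℝ :=
    fun z => f z.1 * ((z.2 : ℝ) ^ m * Real.exp (-(1 / 2) * (z.2 : ℝ) ^ 2)) with hg
  have hdim : Module.finrank ℝ (EuclideanSpace ℝ (Fin d)) = d := by simp
  calc ∫ x, f x * Real.exp (-(1 / 2) * ‖x‖ ^ 2)
      = ∫ x : ({(0)}ᶜ : Set (EuclideanSpace ℝ (Fin d))),
          f x.1 * Real.exp (-(1 / 2) * ‖x.1‖ ^ 2) ∂(volume.comap Subtype.val) := by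
        rw [integral_subtype_comap (measurableSet_singleton _).compl
          fun x => f x * Real.exp (-(1 / 2) * ‖x‖ ^ 2), restrict_compl_singleton]
    _ = ∫ z, g z ∂(volume : Measure (EuclideanSpace ℝ (Fin d))).toSphere.prod
          (.volumeIoiPow (Module.finrank ℝ (EuclideanSpace ℝ (Fin d)) - 1)) := by
        rw [← (volume : Measure (EuclideanSpace ℝ (Fin d))).measurePreserving_homeomorphUnitSphereProd.integral_comp
          (Homeomorph.measurableEmbedding _) g]
        refine integral_congr_ae (Filter.Eventually.of_forall fun x => ?_)
        have hx : ‖x.1‖ ≠ 0 := norm_ne_zero_iff.mpr x.2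
        simp only [hg, homeomorphUnitSphereProd_apply_snd_coe,
          homeomorphUnitSphereProd_apply_fst_coe, hf]
        have hm : (‖x.1‖⁻¹) ^ m * ‖x.1‖ ^ m = 1 := by
          rw [← mul_pow, inv_mul_cancel₀ hx, one_pow]
        linear_combination (-(f x.1 * Real.exp (-(1 / 2) * ‖x.1‖ ^ 2))) * hm
    _ = _ := by
        rw [hg, hdim, integral_prod_mul (fun ξ : Metric.sphere (0 : EuclideanSpace ℝ (Fin d)) 1 => f ξ)
          (fun r : Ioi (0 : ℝ) => ((r : ℝ) ^ m * Real.exp (-(1 / 2) * (r : ℝ) ^ 2)))]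
        congr 1
        simp only [Measure.volumeIoiPow, ENNReal.ofReal]
        rw [integral_withDensity_eq_integral_smul,
          integral_subtype_comap measurableSet_Ioi fun a : ℝ ↦ Real.toNNReal (a ^ (d - 1)) •
            (a ^ m * Real.exp (-(1 / 2) * a ^ 2))]
        · have h := integral_rpow_mul_exp_neg_mul_rpow (p := 2) (q := (d - 1 + m : ℕ)) (b := 1 / 2)
            (by norm_num) (by have : (0 : ℝ) ≤ (d - 1 + m : ℕ) := Nat.cast_nonneg _
                              linarith) (by norm_num)
          have e : ((d - 1 + m : ℕ) : ℝ) + 1 = d + m := by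
            push_cast [Nat.cast_sub hd]; ring
          rw [e, neg_div, add_div] at h
          rw [← h]
          apply setIntegral_congr_fun measurableSet_Ioi
          intro r hr
          simp only [NNReal.smul_def, Real.coe_toNNReal _ (pow_nonneg hr.out.le _), smul_eq_mul,
            Real.rpow_natCast, pow_add, Real.rpow_two]
          ring
        · exact (measurable_subtype_coe.pow_const _).real_toNNReal

end analysis

end SphereAvg

namespace SphereAvg

lemma to_euclid {d : ℕ} (h : (Fin d → ℝ) → ℝ) :
    ∫ y, h y = ∫ x : EuclideanSpace ℝ (Fin d), h (fun i => x i) :=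
  ((PiLp.volume_preserving_ofLp (Fin d)).integral_comp
    (MeasurableEquiv.toLp 2 (Fin d → ℝ)).symm.measurableEmbedding h).symm

lemma gamma_ratio (d n : ℕ) (hd : 1 ≤ d) :
    Real.Gamma ((d : ℝ) / 2 + n) * 2 ^ n
      = Real.Gamma (d / 2) * ∏ k ∈ Finset.range n, ((d : ℝ) + 2 * k) := by
  have hd' : (0 : ℝ) < d := by exact_mod_cast hd
  induction n with
  | zero => simp
  | succ n ih =>
    rw [Finset.prod_range_succ, ← mul_assoc, ← ih]
    push_cast
    rw [← add_assoc, Real.Gamma_add_one (by positivity)]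
    ring

lemma sphere_eq (d n : ℕ) (hd : 1 ≤ d) (x : Fin n → EuclideanSpace ℝ (Fin d)) :
    ∫ ξ, ∏ i, ⟪x i, (ξ : EuclideanSpace ℝ (Fin d))⟫ ^ 2 ∂(sphereUniform d)
      = gE d ((∏ i, lin (fun k => x i k)) * ∏ i, lin (fun k => x i k)) *
        (Real.Gamma (d / 2) / (2 ^ n * Real.Gamma (d / 2 + n))) := by
  have hd' : (0 : ℝ) < d := by exact_mod_cast hd
  have hin : ∀ i (y : EuclideanSpace ℝ (Fin d)),
      MvPolynomial.eval (fun k => y k) (lin (fun k => x i k)) = ⟪x i, y⟫ := by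
    intro i y
    rw [eval_lin, PiLp.inner_apply]
    simp [mul_comm]
  have p1 := polar hd (2 * n) (fun y => ∏ i, ⟪x i, y⟫ ^ 2) (by
    intro r y
    simp only [real_inner_smul_right, mul_pow, Finset.prod_mul_distrib]
    simp [pow_mul])
  have p0 := polar hd 0 (fun _ => (1 : ℝ)) (by simp)
  have z0 : gZ d = ∫ y : EuclideanSpace ℝ (Fin d), 1 * Real.exp (-(1 / 2) * ‖y‖ ^ 2) := by
    rw [gZ, to_euclid]
    simp only [gwd_norm, one_mul]
  have z1 : gE d ((∏ i, lin (fun k => x i k)) * ∏ i, lin (fun k => x i k)) * gZ d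
      = ∫ y : EuclideanSpace ℝ (Fin d),
        (∏ i, ⟪x i, y⟫ ^ 2) * Real.exp (-(1 / 2) * ‖y‖ ^ 2) := by
    simp only [gE, LinearMap.coe_mk, AddHom.coe_mk]
    rw [div_mul_cancel₀ _ gZ_pos.ne', to_euclid]
    simp only [gwd_norm, map_mul, map_prod, hin, sq, Finset.prod_mul_distrib]
  rw [← z0] at p0
  rw [← z1] at p1
  have hz := gZ_pos (d := d)
  rw [sphereUniform, integral_smul_measure]
  simp only [integral_const, smul_eq_mul, mul_one, Nat.cast_zero, zero_div, add_zero,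
    Measure.real] at p0
  simp only [ENNReal.toReal_inv, smul_eq_mul]
  set A := ((volume : Measure (EuclideanSpace ℝ (Fin d))).toSphere Set.univ).toReal
  set S := ∫ ξ, ∏ i, ⟪x i, ((ξ : Metric.sphere (0 : EuclideanSpace ℝ (Fin d)) 1) :
    EuclideanSpace ℝ (Fin d))⟫ ^ 2 ∂(volume : Measure (EuclideanSpace ℝ (Fin d))).toSphere
  have hA : A ≠ 0 := by
    intro h
    rw [h, zero_mul] at p0
    exact hz.ne' p0
  have e : (((2 * n : ℕ) : ℝ)) / 2 = n := by push_cast; ring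
  have e2 : (1 / 2 : ℝ) ^ (-((d : ℝ) / 2 + n)) = (1 / 2 : ℝ) ^ (-((d : ℝ) / 2)) * 2 ^ n := by
    rw [neg_add, Real.rpow_add (by norm_num), Real.rpow_neg (by norm_num) (n : ℝ),
      Real.rpow_natCast]
    simp
  rw [e, e2, p0] at p1
  have g1 : 0 < Real.Gamma ((d : ℝ) / 2) := Real.Gamma_pos_of_pos (by positivity)
  have g2 : 0 < Real.Gamma ((d : ℝ) / 2 + n) := Real.Gamma_pos_of_pos (by positivity)
  have g3 : 0 < (1 / 2 : ℝ) ^ (-((d : ℝ) / 2)) := by positivity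
  set K := (1 / 2 : ℝ) ^ (-((d : ℝ) / 2))
  have : (K * (1 / 2)) * (S * 2 ^ n * Real.Gamma ((d : ℝ) / 2 + n)) = (K * (1 / 2)) * (A *
      gE d ((∏ i, lin (fun k => x i k)) * ∏ i, lin (fun k => x i k)) * Real.Gamma (d / 2)) := by
    linear_combination -p1
  have := mul_left_cancel₀ (by positivity) this
  rw [inv_mul_eq_div, mul_div_assoc', div_eq_div_iff hA (by positivity)]
  linear_combination this

end SphereAvg

theorem sphere_average_prod_squares (d n : ℕ) (hd : 1 ≤ d)
    (x : Fin n → EuclideanSpace ℝ (Fin d)) (hx : ∀ i, ‖x i‖ = 1) :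
    Real.Gamma (d / 2) / (2 ^ n * Real.Gamma (d / 2 + n))
        = 1 / ∏ k ∈ Finset.range n, ((d : ℝ) + 2 * k) ∧
      Real.Gamma (d / 2) / (2 ^ n * Real.Gamma (d / 2 + n))
        ≤ ∫ ξ, ∏ i, ⟪x i, (ξ : EuclideanSpace ℝ (Fin d))⟫ ^ 2 ∂(sphereUniform d) ∧
      ((∫ ξ, ∏ i, ⟪x i, (ξ : EuclideanSpace ℝ (Fin d))⟫ ^ 2 ∂(sphereUniform d))
          = Real.Gamma (d / 2) / (2 ^ n * Real.Gamma (d / 2 + n))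
        ↔ ∀ i j, i ≠ j → ⟪x i, x j⟫ = 0) := by
  have hd' : (0 : ℝ) < d := by exact_mod_cast hd
  have g1 : 0 < Real.Gamma ((d : ℝ) / 2) := Real.Gamma_pos_of_pos (by positivity)
  have g2 : 0 < Real.Gamma ((d : ℝ) / 2 + n) := Real.Gamma_pos_of_pos (by positivity)
  have hin : ∀ i j, ∑ k, x i k * x j k = ⟪x i, x j⟫ := by
    intro i j
    rw [PiLp.inner_apply]
    simp [mul_comm]
  obtain ⟨h1, h2⟩ := SphereAvg.alg_main (SphereAvg.gE d) SphereAvg.gE_ibp SphereAvg.gE_nonneg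
    SphereAvg.gE_one (fun i k => x i k) (fun i => by
      rw [hin, real_inner_self_eq_norm_sq, hx]; norm_num)
  simp only [hin] at h2
  rw [SphereAvg.sphere_eq d n hd x, ← h2]
  have hc : 0 < Real.Gamma (d / 2) / (2 ^ n * Real.Gamma (d / 2 + n)) := by positivity
  refine ⟨?_, le_mul_of_one_le_left hc.le h1, mul_eq_right₀ hc.ne'⟩
  have hp : 0 < ∏ k ∈ Finset.range n, ((d : ℝ) + 2 * k) :=
    Finset.prod_pos fun k _ => by positivity
  rw [div_eq_div_iff (by positivity) hp.ne', one_mul, ← SphereAvg.gamma_ratio d n hd, mul_comm]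
end

section
/- For every positive integer n, n(n+2)(n+4)⋯(3n−2) < ((3√3/e) · n)^n, where the product on the left has n factors, the k-th factor being n + 2(k−1), and e is Euler's number. -/
open BigOperators

lemma log_step (x : ℝ) (hx : 0 < x) :
    Real.log x < ((x + 2) * Real.log (x + 2) - (x + 2)) / 2 - (x * Real.log x - x) / 2 := by
  have h2 : 0 < x + 2 := by linarith
  have hne : x / (x + 2) ≠ 1 := by
    intro h
    rw [div_eq_one_iff_eq h2.ne'] at h
    linarith
  have h := Real.log_lt_sub_one_of_pos (div_pos hx h2) hne
  rw [Real.log_div hx.ne' h2.ne'] at h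
  have h3 := mul_lt_mul_of_pos_left h h2
  have h4 : (x + 2) * (x / (x + 2) - 1) = -2 := by
    field_simp
    ring
  rw [h4] at h3
  nlinarith

/-- For every positive integer `n`, `n(n+2)(n+4)⋯(3n−2) < ((3√3/e)·n)^n`. -/
theorem prod_lt_pow (n : ℕ) (hn : 1 ≤ n) :
    (∏ k ∈ Finset.range n, ((n : ℝ) + 2 * k))
      < (3 * Real.sqrt 3 / Real.exp 1 * n) ^ n := by
  have hn0 : (0 : ℝ) < n := by exact_mod_cast hn
  have hpos : ∀ k : ℕ, (0 : ℝ) < (n : ℝ) + 2 * k := fun k => by positivity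
  have hs3 : (0 : ℝ) < Real.sqrt 3 := by positivity
  have hR : (0 : ℝ) < 3 * Real.sqrt 3 / Real.exp 1 * n := by positivity
  rw [← Real.log_lt_log_iff (Finset.prod_pos fun k _ => hpos k) (pow_pos hR n),
    Real.log_prod (fun k _ => (hpos k).ne'), Real.log_pow,
    Real.log_mul (by positivity) hn0.ne', Real.log_div (by positivity) (Real.exp_pos 1).ne',
    Real.log_mul (by norm_num) hs3.ne', Real.log_sqrt (by norm_num), Real.log_exp]
  let F : ℕ → ℝ := fun k =>
    (((n : ℝ) + 2 * k) * Real.log ((n : ℝ) + 2 * k) - ((n : ℝ) + 2 * k)) / 2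
  have hsum : ∑ k ∈ Finset.range n, Real.log ((n : ℝ) + 2 * k)
      < ∑ k ∈ Finset.range n, (F (k + 1) - F k) := by
    apply Finset.sum_lt_sum_of_nonempty
    · exact Finset.nonempty_range_iff.mpr (by omega)
    · intro k _
      have h := log_step _ (hpos k)
      have e : (n : ℝ) + 2 * ((k + 1 : ℕ) : ℝ) = (n : ℝ) + 2 * k + 2 := by
        push_cast
        ring
      simp only [F]
      rw [e]
      exact h
  rw [Finset.sum_range_sub] at hsum
  refine hsum.trans_eq ?_
  have e1 : (n : ℝ) + 2 * n = 3 * n := by ring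
  simp only [F, e1, Nat.cast_zero, mul_zero, add_zero]
  rw [Real.log_mul (by norm_num) hn0.ne']
  ring
end

section
/- Let A be a real antisymmetric n×n matrix and B a real symmetric positive definite n×n matrix, and suppose the eigenvalues of the real antisymmetric matrix B^{−1/2} A B^{−1/2} are a_1 √(−1), ..., a_n √(−1) with a_1, ..., a_n real. Then for every real λ, det [[−λA, B], [−B, A]] = (det B)² · ∏_{i=1}^n (1 + a_i² λ), where [[−λA, B], [−B, A]] denotes the 2n×2n block matrix with blocks −λA, B, −B, A. -/
open Matrix BigOperators Polynomial

lemma det_J_aux (n : ℕ) :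
    (Matrix.fromBlocks (0 : Matrix (Fin n) (Fin n) ℝ) (1 : Matrix (Fin n) (Fin n) ℝ)
        (-1 : Matrix (Fin n) (Fin n) ℝ) (0 : Matrix (Fin n) (Fin n) ℝ)).det = 1 := by
  have h : Matrix.fromBlocks (0 : Matrix (Fin n) (Fin n) ℝ) (1 : Matrix (Fin n) (Fin n) ℝ)
        (-1 : Matrix (Fin n) (Fin n) ℝ) (0 : Matrix (Fin n) (Fin n) ℝ)
      = Matrix.fromBlocks 1 1 0 1 * Matrix.fromBlocks 1 0 (-1) 1
        * Matrix.fromBlocks 1 1 0 1 := by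
    simp [Matrix.fromBlocks_multiply]
  rw [h]
  simp [Matrix.det_mul]

lemma det_block_aux (n : ℕ) (S : Matrix (Fin n) (Fin n) ℝ) (l : ℝ) :
    (Matrix.fromBlocks (-(l • S)) 1 (-1) S).det = (1 - l • (S * S)).det := by
  have h : Matrix.fromBlocks (-(l • S)) 1 (-1) S
      = Matrix.fromBlocks (0 : Matrix (Fin n) (Fin n) ℝ) (1 : Matrix (Fin n) (Fin n) ℝ)
        (-1 : Matrix (Fin n) (Fin n) ℝ) (0 : Matrix (Fin n) (Fin n) ℝ)
        * Matrix.fromBlocks 1 (-S) (-(l • S)) 1 := by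
    simp [Matrix.fromBlocks_multiply]
  rw [h, Matrix.det_mul, det_J_aux, one_mul, Matrix.det_fromBlocks_one₁₁]
  simp

lemma det_one_sub_aux (n : ℕ) (S : Matrix (Fin n) (Fin n) ℂ) (b : Fin n → ℂ)
    (h : S.charpoly = ∏ i, (X - C (b i))) (μ : ℂ) :
    (1 - μ • S).det = ∏ i, (1 - μ * b i) := by
  by_cases hμ : μ = 0
  · simp [hμ]
  have h1 := congrArg (Polynomial.eval μ⁻¹) h
  rw [Matrix.eval_charpoly, Polynomial.eval_prod] at h1
  have h2 : 1 - μ • S = μ • (Matrix.scalar (Fin n) μ⁻¹ - S) := by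
    rw [smul_sub, Matrix.scalar_apply, ← Matrix.smul_one_eq_diagonal, smul_smul,
      mul_inv_cancel₀ hμ, one_smul]
  rw [h2, Matrix.det_smul, h1, ← Finset.card_univ, ← Finset.prod_const,
    ← Finset.prod_mul_distrib]
  refine Finset.prod_congr rfl fun i _ => ?_
  simp [mul_sub, hμ]

/-- Let `A` be real antisymmetric, `B` real symmetric positive definite, and let `R`
be the inverse `B^{-1/2}` of the positive definite symmetric square root of `B`
(i.e. `R` is symmetric positive definite with `R * R = B⁻¹`). If the eigenvalues of
the real antisymmetric matrix `B^{-1/2} A B^{-1/2} = R * A * R` are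
`a₁ √(−1), …, aₙ √(−1)`, then for every real `λ`,
`det [[−λA, B], [−B, A]] = (det B)² ∏ᵢ (1 + aᵢ² λ)`. -/
theorem det_block_eq_det_sq_mul_prod (n : ℕ) (A B R : Matrix (Fin n) (Fin n) ℝ)
    (hA : Aᵀ = -A) (hBsymm : Bᵀ = B)
    (hBpd : ∀ x : Fin n → ℝ, x ≠ 0 → 0 < x ⬝ᵥ B *ᵥ x)
    (hRsymm : Rᵀ = R)
    (hRpd : ∀ x : Fin n → ℝ, x ≠ 0 → 0 < x ⬝ᵥ R *ᵥ x)
    (hR : R * R = B⁻¹)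
    (a : Fin n → ℝ)
    (ha : ((R * A * R).map (Complex.ofReal)).charpoly
      = ∏ i, (X - C ((a i : ℂ) * Complex.I))) :
    ∀ l : ℝ, (Matrix.fromBlocks (-(l • A)) B (-B) A).det
      = B.det ^ 2 * ∏ i, (1 + (a i) ^ 2 * l) := by
  intro l
  have hBdet : B.det ≠ 0 := by
    intro h0
    obtain ⟨x, hx, hBx⟩ := Matrix.exists_mulVec_eq_zero_iff.mpr h0
    have := hBpd x hx
    simp [hBx] at this
  have hRRB : R * (R * B) = 1 := by
    rw [← mul_assoc, hR, Matrix.nonsing_inv_mul _ (isUnit_iff_ne_zero.mpr hBdet)]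
  have hRBR : R * B * R = 1 := mul_eq_one_comm.mp hRRB
  have hdet : R.det ^ 2 * B.det = 1 := by
    have := congrArg Matrix.det hRRB
    rw [Matrix.det_mul, Matrix.det_mul, Matrix.det_one] at this
    rw [← this]; ring
  have hblk : Matrix.fromBlocks R 0 0 R * Matrix.fromBlocks (-(l • A)) B (-B) A
      * Matrix.fromBlocks R 0 0 R
      = Matrix.fromBlocks (-(l • (R * A * R))) 1 (-1) (R * A * R) := by
    simp [Matrix.fromBlocks_multiply, hRBR]
  have hd := congrArg Matrix.det hblk
  rw [Matrix.det_mul, Matrix.det_mul, Matrix.det_fromBlocks_zero₂₁, det_block_aux] at hd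
  have hkey : (1 - l • ((R * A * R) * (R * A * R))).det = ∏ i, (1 + (a i) ^ 2 * l) := by
    generalize R * A * R = S at ha
    apply Complex.ofReal_injective
    obtain ⟨μ, hμ⟩ := IsAlgClosed.exists_pow_nat_eq (l : ℂ) two_pos
    have e1 := det_one_sub_aux n _ _ ha μ
    have e2 := det_one_sub_aux n _ _ ha (-μ)
    have e3 : ((1 - l • (S * S)).map Complex.ofReal)
        = (1 - μ • S.map Complex.ofReal) * (1 - (-μ) • S.map Complex.ofReal) := by
      have e4 : (S * S).map Complex.ofReal = S.map Complex.ofReal * S.map Complex.ofReal :=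
        Matrix.map_mul (f := Complex.ofRealHom)
      have e5 : ((1 - l • (S * S)).map Complex.ofReal)
          = 1 - (l : ℂ) • (S * S).map Complex.ofReal := by
        ext i j
        by_cases hij : i = j <;> simp [hij]
      rw [e5, e4, ← hμ, sub_mul, one_mul, mul_sub, mul_one,
        smul_mul_smul_comm, pow_two, mul_neg, neg_smul, neg_smul]
      abel
    have e6 : (((1 - l • (S * S)).det : ℝ) : ℂ) = ((1 - l • (S * S)).map Complex.ofReal).det :=
      RingHom.map_det Complex.ofRealHom _
    rw [e6, e3, Matrix.det_mul, e1, e2, ← Finset.prod_mul_distrib]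
    push_cast
    refine Finset.prod_congr rfl fun i _ => ?_
    rw [← hμ]
    linear_combination (-(μ ^ 2 * (a i : ℂ) ^ 2)) * Complex.I_sq
  rw [hkey] at hd
  rw [← hd]
  linear_combination (-(Matrix.fromBlocks (-(l • A)) B (-B) A).det
    * (R.det ^ 2 * B.det + 1)) * hdet
end
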